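/- arXiv:1910.12683 — 3 statements merged into one kernel-verified Lean document; each statement's English description precedes it below -/
import Mathlib

section
/- Let N ⊴ G be a normal subgroup of a finite group G and suppose χ ∈ Irr(G) has degree χ(1) relatively prime to the index [G : N]. Then the restriction χ_N is irreducible. -/
open scoped Classical

noncomputable section

/-- The inner product of two class functions on a finite group. -/
def cdot (G : Type*) [Group G] [Finite G] (f h : G → ℂ) : ℂ :=
  (Nat.card G : ℂ)⁻¹ * ∑ᶠ g : G, f g * (starRingEnd ℂ) (h g)

/-- `f` is the character of a finite-dimensional complex representation of `G`. -/
def IsChar (G : Type*) [Group G] (f : G → ℂ) : Prop :=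
  ∃ (n : ℕ) (ρ : G →* Matrix.GeneralLinearGroup (Fin n) ℂ),
    f = fun g => Matrix.trace ((ρ g : Matrix (Fin n) (Fin n) ℂ))

/-- `f` is a linear (degree one) character of `G`. -/
def IsLinearChar (G : Type*) [Group G] (f : G → ℂ) : Prop :=
  ∃ ρ : G →* ℂˣ, f = fun g => (ρ g : ℂ)

/-- `f` is an irreducible character of `G`: a character of norm one. -/
def IsIrrChar (G : Type*) [Group G] [Finite G] (f : G → ℂ) : Prop :=
  IsChar G f ∧ cdot G f f = 1

/-- The class function on `G` induced from a class function on a subgroup `H`. -/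
def ind {G : Type*} [Group G] [Finite G] (H : Subgroup G) (f : H → ℂ) : G → ℂ :=
  fun g => (Nat.card H : ℂ)⁻¹ *
    ∑ᶠ x : G, if h : x * g * x⁻¹ ∈ H then f ⟨x * g * x⁻¹, h⟩ else 0

/-- Restriction of a class function on `G` to a subgroup `H`. -/
def res {G : Type*} [Group G] (H : Subgroup G) (f : G → ℂ) : H → ℂ := fun x => f x

/-- Restriction of a class function on a subgroup `K` to a smaller subgroup `H ≤ K`. -/
def resTo {G : Type*} [Group G] {K H : Subgroup G} (hHK : H ≤ K) (f : K → ℂ) : H → ℂ :=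
  fun x => f ⟨x.1, hHK x.2⟩

/-- Induction of a class function from a subgroup `H` to a larger subgroup `K`. -/
def indTo {G : Type*} [Group G] [Finite G] (K H : Subgroup G) (f : H → ℂ) : K → ℂ :=
  ind (H.subgroupOf K) fun y => f ⟨y.1.1, Subgroup.mem_subgroupOf.mp y.2⟩

/-- `G` is almost monomial. -/
def IsAlmostMonomial (G : Type*) [Group G] [Finite G] : Prop :=
  ∀ χ φ : G → ℂ, IsIrrChar G χ → IsIrrChar G φ → χ ≠ φ →
    ∃ (H : Subgroup G) (l : H → ℂ), IsLinearChar H l ∧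
      cdot G (ind H l) χ ≠ 0 ∧ cdot G (ind H l) φ = 0

/-- `G` is relative almost monomial with respect to the (normal) subgroup `N`. -/
def IsRelAlmostMonomial (G : Type*) [Group G] [Finite G] (N : Subgroup G) : Prop :=
  ∀ χ φ : G → ℂ, IsIrrChar G χ → IsIrrChar G φ → χ ≠ φ →
    ∃ (H : Subgroup G) (hNH : N ≤ H) (ψ : H → ℂ), IsIrrChar H ψ ∧
      IsIrrChar N (resTo hNH ψ) ∧
      cdot G (ind H ψ) χ ≠ 0 ∧ cdot G (ind H ψ) φ = 0

/-- `H` is a subnormal subgroup of `G`. -/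
def IsSubnormalSubgroup (G : Type*) [Group G] (H : Subgroup G) : Prop :=
  ∃ (n : ℕ) (c : Fin (n + 1) → Subgroup G), c 0 = H ∧ c (Fin.last n) = ⊤ ∧
    ∀ i : Fin n, ((c i.castSucc).subgroupOf (c i.succ)).Normal

/-- `G` is normally almost monomial. -/
def IsNormallyAlmostMonomial (G : Type*) [Group G] [Finite G] : Prop :=
  ∀ χ φ : G → ℂ, IsIrrChar G χ → IsIrrChar G φ → χ ≠ φ →
    ∃ (H : Subgroup G), H.Normal ∧ ∃ l : H → ℂ, IsLinearChar H l ∧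
      cdot G (ind H l) χ ≠ 0 ∧ cdot G (ind H l) φ = 0

/-- `G` is subnormally almost monomial. -/
def IsSubnormallyAlmostMonomial (G : Type*) [Group G] [Finite G] : Prop :=
  ∀ χ φ : G → ℂ, IsIrrChar G χ → IsIrrChar G φ → χ ≠ φ →
    ∃ (H : Subgroup G), IsSubnormalSubgroup G H ∧ ∃ l : H → ℂ, IsLinearChar H l ∧
      cdot G (ind H l) χ ≠ 0 ∧ cdot G (ind H l) φ = 0

/-- `G` is quasi-monomial. -/
def IsQuasiMonomial (G : Type*) [Group G] [Finite G] : Prop :=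
  ∀ χ : G → ℂ, IsIrrChar G χ → ∃ (H : Subgroup G) (l : H → ℂ) (d : ℕ),
    IsLinearChar H l ∧ 1 ≤ d ∧ ind H l = fun g => (d : ℂ) * χ g

/-- The set of irreducible characters of `G`. -/
def IrrSet (G : Type*) [Group G] [Finite G] : Set (G → ℂ) := {χ | IsIrrChar G χ}

/-- `f` belongs to the semigroup `M(G)` generated by monomial characters. -/
def InMG (G : Type*) [Group G] [Finite G] (f : G → ℂ) : Prop :=
  ∃ (k : ℕ) (H : Fin (k + 1) → Subgroup G) (l : ∀ i, (H i) → ℂ),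
    (∀ i, IsLinearChar (H i) (l i)) ∧ f = fun g => ∑ i, ind (H i) (l i) g

/-- The set of irreducible constituents of a class function `f`. -/
def Cons (G : Type*) [Group G] [Finite G] (f : G → ℂ) : Set (G → ℂ) :=
  {φ | IsIrrChar G φ ∧ cdot G φ f ≠ 0}

/-- `L_t(G)`: the number of constituent-sets of size `t` of characters in `M(G)`. -/
def Lt (G : Type*) [Group G] [Finite G] (t : ℕ) : ℕ :=
  Nat.card {S : Set (G → ℂ) // ∃ f, InMG G f ∧ Cons G f = S ∧ Nat.card S = t}

end

/-!
Let `V` afford `χ` and let `C` be the commutant of `N` in `End V`. Conjugation by `G` induces an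
action of `G ⧸ N` on `C`, and by Schur's lemma its only fixed points are the scalars. Averaging a
central idempotent `z` of `C` over `G ⧸ N` gives the scalar `[G : N] * rank z / χ(1)`, an algebraic
integer; by coprimality `χ(1)` divides `rank z`, so `z` is `0` or `1` and `C` is a full matrix
algebra `M_e`, with `e ∣ χ(1)` because `V` is a `C`-module. Since `PGL_e` is the quotient of `SL_e`
by a group of order `e`, the Schur–Zassenhaus theorem lifts the action of `G ⧸ N` on `M_e` to a
representation of degree `e`. Having only scalar endomorphisms it is irreducible, so `e` divides
`[G : N]` as well. Hence `e = 1` and `C` consists of scalars.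
-/

open Module Representation

section Integrality

theorem dvd_of_isIntegral_natCast_div {k : Type*} [Field k] [CharZero k] {m n : ℕ} (hm : m ≠ 0)
    (h : IsIntegral ℤ ((n : k) / m)) : m ∣ n := by
  have hm' : (m : ℚ) ≠ 0 := Nat.cast_ne_zero.mpr hm
  have hℚ : IsIntegral ℤ ((n : ℚ) / m) :=
    (isIntegral_algebraMap_iff (algebraMap ℚ k).injective).mp (by simpa using h)
  obtain ⟨z, hz⟩ := IsIntegrallyClosed.isIntegral_iff.mp hℚ
  have hnz : (n : ℤ) = m * z := by
    have : (n : ℚ) = m * z := by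
      rw [← eq_intCast (algebraMap ℤ ℚ) z, hz, mul_div_cancel₀ _ hm']
    exact_mod_cast this
  exact Int.natCast_dvd_natCast.mp ⟨z, hnz⟩

theorem isIntegral_trace {R k V : Type*} [CommRing R] [Field k] [IsAlgClosed k] [AddCommGroup V]
    [Module k V] [FiniteDimensional k V] [Algebra R k] [Algebra R (End k V)]
    [IsScalarTower R k (End k V)] {f : End k V} (hf : IsIntegral R f) :
    IsIntegral R (LinearMap.trace k V f) := by
  obtain ⟨p, hp, hpf⟩ := hf
  rw [← Polynomial.aeval_def] at hpf
  rw [End.trace_eq_sum_roots_charpoly_of_splits (IsAlgClosed.splits _)]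
  refine IsIntegral.multiset_sum fun μ hμ => ?_
  obtain ⟨v, hv⟩ := ((End.hasEigenvalue_iff_isRoot_charpoly f μ).mpr
    (Polynomial.isRoot_of_mem_roots hμ)).exists_hasEigenvector
  have hroot : (p.map (algebraMap R k)).eval μ • v = 0 := by
    rw [← End.aeval_apply_of_hasEigenvector hv, Polynomial.aeval_map_algebraMap, hpf,
      LinearMap.zero_apply]
  refine ⟨p, hp, ?_⟩
  rw [← Polynomial.eval_map]
  exact (smul_eq_zero.mp hroot).resolve_right hv.2

end Integrality

section Commutant

theorem isSimpleModule_of_isIdempotentElem {R M : Type*} [Ring R] [AddCommGroup M] [Module R M]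
    [IsSemisimpleModule R M] [Nontrivial M]
    (h : ∀ f : End R M, IsIdempotentElem f → f = 0 ∨ f = 1) : IsSimpleModule R M := by
  refine { toNontrivial := inferInstance, eq_bot_or_eq_top := fun p => ?_ }
  obtain ⟨q, hpq⟩ := exists_isCompl p
  rw [← Submodule.range_projection hpq]
  rcases h _ (Submodule.isIdempotentElem_projection hpq) with h0 | h1
  · exact Or.inl (by rw [h0, LinearMap.range_zero])
  · exact Or.inr (by rw [h1]; exact LinearMap.range_id)

variable {k G V : Type*} [Field k] [Group G] [AddCommGroup V] [Module k V]
  (ρ : Representation k G V)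

/-- The commutant of a representation: the algebra of its endomorphisms, encoded as the centralizer
of its image in `End k V` so that traces and conjugation are those of `End k V`. -/
abbrev commutant : Subalgebra k (End k V) :=
  Subalgebra.centralizer k (Set.range ρ)

/-- The commutant is the algebra of self-intertwiners; this identification transports Mathlib's
Schur lemma to it. -/
def intertwiningMapEquivCommutant : IntertwiningMap ρ ρ ≃ₐ[k] commutant ρ where
  toFun f := ⟨f.toLinearMap, Set.forall_mem_range.mpr fun g => (f.isIntertwining' g).symm⟩
  invFun b := ⟨b, fun g => (b.2 (ρ g) ⟨g, rfl⟩).symm⟩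
  left_inv _ := rfl
  right_inv _ := rfl
  map_mul' _ _ := rfl
  map_add' _ _ := rfl
  commutes' _ := rfl

/-- The commutant is the endomorphism ring of the group algebra module attached to `ρ`; this
identification transports the theory of semisimple modules to it. -/
noncomputable def commutantEquivEnd : commutant ρ ≃ₐ[k] End (MonoidAlgebra k G) ρ.asModule :=
  (intertwiningMapEquivCommutant ρ).symm.trans (IntertwiningMap.equivAlgEnd ρ)

theorem isSemisimpleRing_commutant [FiniteDimensional k V] [Finite G] [NeZero (Nat.card G : k)] :
    IsSemisimpleRing (commutant ρ) := by
  have : Module.Finite k ρ.asModule := ‹FiniteDimensional k V›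
  have : Module.Finite (MonoidAlgebra k G) ρ.asModule :=
    Module.Finite.of_restrictScalars_finite k _ _
  have := IsSemisimpleRing.moduleEnd (MonoidAlgebra k G) ρ.asModule
  exact (commutantEquivEnd ρ).symm.toRingEquiv.isSemisimpleRing

theorem nontrivial_of_isIrreducible [ρ.IsIrreducible] : Nontrivial V :=
  IsSimpleModule.nontrivial (MonoidAlgebra k G) ρ.asModule

theorem commutant_eq_bot [IsAlgClosed k] [FiniteDimensional k V] [ρ.IsIrreducible] :
    commutant ρ = ⊥ := by
  refine eq_bot_iff.mpr fun b hb => ?_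
  obtain ⟨c, hc⟩ :=
    (IsIrreducible.algebraMap_intertwiningMap_bijective_of_isAlgClosed (ρ := ρ)).2
      ((intertwiningMapEquivCommutant ρ).symm ⟨b, hb⟩)
  exact Algebra.mem_bot.mpr ⟨c, congrArg IntertwiningMap.toLinearMap hc⟩

variable {ρ} in
theorem isIrreducible_of_commutant_eq_bot [Nontrivial V] [Finite G] [NeZero (Nat.card G : k)]
    (h : commutant ρ = ⊥) : ρ.IsIrreducible := by
  have : Nontrivial ρ.asModule := ‹Nontrivial V›
  rw [irreducible_iff_isSimpleModule_asModule]
  refine isSimpleModule_of_isIdempotentElem fun f hf => ?_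
  obtain ⟨b, rfl⟩ := (commutantEquivEnd ρ).surjective f
  obtain ⟨c, hc⟩ := Algebra.mem_bot.mp (h.le b.2)
  obtain rfl : algebraMap k _ c = b := Subtype.ext hc
  rw [AlgEquiv.commutes] at hf ⊢
  have hcc : IsIdempotentElem c :=
    (algebraMap k (End (MonoidAlgebra k G) ρ.asModule)).injective (by rw [map_mul]; exact hf)
  rcases IsIdempotentElem.iff_eq_zero_or_one.mp hcc with rfl | rfl
  · exact Or.inl (map_zero _)
  · exact Or.inr (map_one _)

end Commutant

section DegreeDividesOrder

variable {k G V : Type*} [Field k] [Group G] [AddCommGroup V] [Module k V]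
  (ρ : Representation k G V)

theorem isIntegral_character [IsAlgClosed k] [FiniteDimensional k V] [Finite G] (g : G) :
    IsIntegral ℤ (ρ.character g) :=
  isIntegral_trace <| IsIntegral.of_pow Nat.card_pos <| by
    rw [← map_pow, pow_card_eq_one', map_one]
    exact isIntegral_one

theorem isIntegral_sum_smul [Fintype G] {c : G → k} (hc : ∀ g, IsIntegral ℤ (c g)) :
    IsIntegral ℤ (∑ g, c g • ρ g) := by
  -- The sum is the image of an element of the group algebra over the ring of algebraic integers,
  -- which is finite over that ring.
  let A := integralClosure ℤ k
  let z : MonoidAlgebra A G := ∑ g, MonoidAlgebra.single g ⟨c g, hc g⟩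
  let ψ := MonoidAlgebra.lift A (End k V) G ρ
  have hz : ψ z = ∑ g, c g • ρ g := by
    simp only [z, ψ, map_sum, MonoidAlgebra.lift_single]
    rfl
  rw [← hz]
  exact isIntegral_trans (R := ℤ) (A := A) _ ((Algebra.IsIntegral.isIntegral z).map ψ)

theorem sum_smul_mem_commutant [Fintype G] {c : G → k} (hc : ∀ g h, c (h * g * h⁻¹) = c g) :
    ∑ g, c g • ρ g ∈ commutant ρ := by
  rintro _ ⟨h, rfl⟩
  simp only [Finset.mul_sum, Finset.sum_mul, mul_smul_comm, smul_mul_assoc, ← map_mul]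
  refine Fintype.sum_equiv (MulAut.conj h).toEquiv _ _ fun g => ?_
  simp [hc]

theorem sum_character_mul_character_inv [IsAlgClosed k] [FiniteDimensional k V] [Fintype G]
    [NeZero (Nat.card G : k)] [ρ.IsIrreducible] :
    ∑ g, ρ.character g * ρ.character g⁻¹ = Nat.card G := by
  have hG : (Nat.card G : k) ≠ 0 := NeZero.ne _
  have := invertibleOfNonzero hG
  have h := card_inv_mul_sum_char_mul_char_eq_finrank ρ ρ
  rwa [IsIrreducible.finrank_intertwiningMap_self, Nat.cast_one, inv_mul_eq_one₀ hG, eq_comm] at h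

theorem finrank_dvd_card [IsAlgClosed k] [CharZero k] [FiniteDimensional k V] [Finite G]
    [ρ.IsIrreducible] : finrank k V ∣ Nat.card G := by
  have := Fintype.ofFinite G
  have : Nontrivial V := nontrivial_of_isIrreducible ρ
  have hd : (finrank k V : k) ≠ 0 := Nat.cast_ne_zero.mpr finrank_pos.ne'
  have hmem : ∑ g, ρ.character g⁻¹ • ρ g ∈ commutant ρ :=
    sum_smul_mem_commutant ρ fun g h => by rw [conj_inv, char_conj]
  obtain ⟨c, hc⟩ := Algebra.mem_bot.mp (commutant_eq_bot ρ ▸ hmem)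
  have hcard : (Nat.card G : k) / finrank k V = c := by
    have htrace := congrArg (LinearMap.trace k V) hc
    simp only [map_sum, map_smul, smul_eq_mul, Algebra.algebraMap_eq_smul_one,
      LinearMap.trace_one] at htrace
    rw [div_eq_iff hd, htrace, ← sum_character_mul_character_inv ρ]
    exact Finset.sum_congr rfl fun g _ => mul_comm _ _
  have hint := isIntegral_sum_smul ρ fun g => isIntegral_character ρ g⁻¹
  rw [← hc] at hint
  refine dvd_of_isIntegral_natCast_div (k := k) finrank_pos.ne' ?_
  rw [hcard]
  exact (isIntegral_algebraMap_iff (algebraMap k (End k V)).injective).mp hint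

end DegreeDividesOrder

section CoprimeLifting

theorem exists_comp_eq_id_of_coprime {Γ H : Type*} [Group Γ] [Group H] {π : Γ →* H}
    (hπ : Function.Surjective π) (hcop : (Nat.card π.ker).Coprime (Nat.card H)) :
    ∃ s : H →* Γ, π.comp s = MonoidHom.id H := by
  have hindex : π.ker.index = Nat.card H := by
    rw [Subgroup.index_ker, MonoidHom.range_eq_top.mpr hπ, Subgroup.card_top]
  obtain ⟨K, hK⟩ := Subgroup.exists_right_complement'_of_coprime (hindex ▸ hcop)
  have hbij : Function.Bijective (π.comp K.subtype) := by
    refine ⟨(injective_iff_map_eq_one _).mpr fun x hx => ?_, fun y => ?_⟩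
    · exact Subtype.ext (Subgroup.disjoint_def.mp hK.disjoint hx x.2)
    · obtain ⟨g, rfl⟩ := hπ y
      obtain ⟨⟨n, x⟩, rfl⟩ := hK.2 g
      exact ⟨x, by simp [show π n = 1 from n.2]⟩
  let e := MulEquiv.ofBijective _ hbij
  exact ⟨K.subtype.comp e.symm.toMonoidHom, MonoidHom.ext e.apply_symm_apply⟩

theorem exists_comp_eq_of_coprime {S A H : Type*} [Group S] [Group A] [Group H] {f : S →* A}
    (hf : Function.Surjective f) (hcop : (Nat.card f.ker).Coprime (Nat.card H)) (α : H →* A) :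
    ∃ τ : H →* S, f.comp τ = α := by
  -- Split the pullback of `f` along `α`, whose kernel over `H` embeds into that of `f`.
  let Γ : Subgroup (S × H) := (f.comp (MonoidHom.fst S H)).eqLocus (α.comp (MonoidHom.snd S H))
  let π : Γ →* H := (MonoidHom.snd S H).comp Γ.subtype
  have hπ : Function.Surjective π := fun h => by
    obtain ⟨s, hs⟩ := hf (α h)
    exact ⟨⟨(s, h), hs⟩, rfl⟩
  have hfst (x : Γ) : f x.1.1 = α (π x) := x.2
  let ι : π.ker →* f.ker := ((MonoidHom.fst S H).comp (Γ.subtype.comp π.ker.subtype)).codRestrict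
    f.ker fun x => (hfst x).trans (by rw [show π x = 1 from x.2, map_one])
  have hι : Function.Injective ι := fun x y hxy =>
    Subtype.ext (Subtype.ext (Prod.ext (congrArg Subtype.val hxy) (x.2.trans y.2.symm)))
  obtain ⟨s, hs⟩ := exists_comp_eq_id_of_coprime hπ
    (hcop.coprime_dvd_left (Subgroup.card_dvd_of_injective ι hι))
  exact ⟨(MonoidHom.fst S H).comp (Γ.subtype.comp s), MonoidHom.ext fun h =>
    (hfst (s h)).trans (congrArg α (DFunLike.congr_fun hs h))⟩

variable (k W : Type*) [Field k] [AddCommGroup W] [Module k W]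

/-- The conjugation action of `SL(W)` on `End k W`. By Skolem–Noether its target plays the role of
`PGL(W)`, so this is the covering `SL(W) → PGL(W)`. -/
def specialLinearConj : SpecialLinearGroup k W →* (End k W ≃ₐ[k] End k W) where
  toFun u := u.1.conjAlgEquiv k
  map_one' := rfl
  map_mul' _ _ := rfl

theorem ker_specialLinearConj_le_center :
    (specialLinearConj k W).ker ≤ Subgroup.center (SpecialLinearGroup k W) := by
  intro u hu
  refine Subgroup.mem_center_iff.mpr fun v => ?_
  have h : u * v * u⁻¹ = v := by
    ext x
    exact LinearMap.congr_fun
      (AlgEquiv.congr_fun (show specialLinearConj k W u = 1 from hu) v.1.toLinearMap) x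
  exact (mul_inv_eq_iff_eq_mul.mp h).symm

theorem card_ker_specialLinearConj_dvd [IsAlgClosed k] [CharZero k] [FiniteDimensional k W]
    [Nontrivial W] : Nat.card (specialLinearConj k W).ker ∣ finrank k W := by
  have := NeZero.of_pos (finrank_pos (R := k) (M := W))
  have hcenter : Nat.card (Subgroup.center (SpecialLinearGroup k W)) = finrank k W := by
    rw [Nat.card_congr SpecialLinearGroup.centerEquivRootsOfUnity.toEquiv, max_eq_left finrank_pos,
      HasEnoughRootsOfUnity.natCard_rootsOfUnity]
  exact hcenter ▸ Subgroup.card_dvd_of_le (ker_specialLinearConj_le_center k W)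

theorem specialLinearConj_surjective [IsAlgClosed k] [FiniteDimensional k W] [Nontrivial W] :
    Function.Surjective (specialLinearConj k W) := by
  intro f
  obtain ⟨T, rfl⟩ := LinearEquiv.conjAlgEquiv_surjective k W W f
  obtain ⟨c, hc⟩ :=
    IsAlgClosed.exists_pow_nat_eq ((T.det⁻¹ : kˣ) : k) (finrank_pos (R := k) (M := W))
  have hc0 : c ≠ 0 := by
    rintro rfl
    exact T.det⁻¹.ne_zero (by rw [← hc, zero_pow finrank_pos.ne'])
  let u := LinearEquiv.smulOfNeZero k W c hc0
  have hu : (u : W →ₗ[k] W) = c • LinearMap.id := rfl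
  have hdet : u.det = T.det⁻¹ := by
    ext
    rw [← hc, LinearEquiv.coe_det, hu, LinearMap.det_smul, LinearMap.det_id, mul_one]
  refine ⟨⟨T * u, by rw [map_mul, hdet, mul_inv_cancel]⟩, AlgEquiv.ext fun b => ?_⟩
  ext x
  change T (c • b (c⁻¹ • T.symm x)) = T (b (T.symm x))
  rw [map_smul b, smul_inv_smul₀ hc0]

end CoprimeLifting

section MatrixAlgebra

theorem subsingleton_of_forall_isIdempotentElem_mem_center {ι : Type*} {A : ι → Type*}
    [∀ i, Ring (A i)] [∀ i, Nontrivial (A i)]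
    (h : ∀ z ∈ Set.center (Π i, A i), IsIdempotentElem z → z = 0 ∨ z = 1) : Subsingleton ι := by
  refine ⟨fun i j => ?_⟩
  by_contra hij
  have hz : (Pi.single i 1 : Π i, A i) ∈ Set.center (Π i, A i) := by
    refine Semigroup.mem_center_iff.mpr fun b => ?_
    ext l
    rcases eq_or_ne l i with rfl | hl <;> simp [*]
  have hidem : IsIdempotentElem (Pi.single i 1 : Π i, A i) := by
    rw [IsIdempotentElem, ← Pi.single_mul, mul_one]
  rcases h _ hz hidem with h0 | h1
  · exact one_ne_zero (Pi.single_eq_zero_iff.mp h0)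
  · simpa [Ne.symm hij] using congrFun h1 j

theorem exists_algEquiv_matrix_of_forall_isIdempotentElem_mem_center {k E : Type*} [Field k]
    [IsAlgClosed k] [Ring E] [Algebra k E] [FiniteDimensional k E] [IsSemisimpleRing E]
    [Nontrivial E] (h : ∀ z ∈ Set.center E, IsIdempotentElem z → z = 0 ∨ z = 1) :
    ∃ (e : ℕ) (_ : NeZero e), Nonempty (E ≃ₐ[k] Matrix (Fin e) (Fin e) k) := by
  obtain ⟨m, d, hd, ⟨Ψ⟩⟩ := IsSemisimpleRing.exists_algEquiv_pi_matrix_of_isAlgClosed k E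
  have : Subsingleton (Fin m) := by
    refine subsingleton_of_forall_isIdempotentElem_mem_center
      (A := fun i => Matrix (Fin (d i)) (Fin (d i)) k) fun z hz hidem => ?_
    have := h (Ψ.symm z) (MulEquivClass.apply_mem_center Ψ.symm hz) (hidem.map Ψ.symm)
    rwa [map_eq_zero_iff _ Ψ.symm.injective, map_eq_one_iff _ Ψ.symm.injective] at this
  obtain ⟨i⟩ : Nonempty (Fin m) := by
    by_contra hm
    rw [not_nonempty_iff] at hm
    exact not_subsingleton E Ψ.injective.subsingleton
  have : Unique (Fin m) := uniqueOfSubsingleton i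
  exact ⟨d default, hd default, ⟨Ψ.trans
    (.ofRingEquiv (f := .piUnique fun i => Matrix (Fin (d i)) (Fin (d i)) k) fun _ => rfl)⟩⟩

theorem card_dvd_finrank_of_algHom_matrix {k V ι : Type*} [Field k] [CharZero k] [AddCommGroup V]
    [Module k V] [FiniteDimensional k V] [Fintype ι] [DecidableEq ι] [Nonempty ι]
    (φ : Matrix ι ι k →ₐ[k] End k V) : Fintype.card ι ∣ finrank k V := by
  -- The diagonal matrix units act as conjugate idempotents of sum `1`, so they have equal rank.
  obtain ⟨i₀⟩ := ‹Nonempty ι›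
  have hidem : IsIdempotentElem (φ (Matrix.single i₀ i₀ 1)) :=
    IsIdempotentElem.map (by simp [IsIdempotentElem]) φ
  have htrace (i : ι) : LinearMap.trace k V (φ (Matrix.single i i 1)) =
      finrank k (LinearMap.range (φ (Matrix.single i₀ i₀ 1))) :=
    calc LinearMap.trace k V (φ (Matrix.single i i 1))
        = LinearMap.trace k V (φ (Matrix.single i i₀ 1) * φ (Matrix.single i₀ i 1)) := by
          simp [← map_mul]
      _ = LinearMap.trace k V (φ (Matrix.single i₀ i₀ 1)) := by
          rw [LinearMap.trace_mul_comm]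
          simp [← map_mul]
      _ = _ := (LinearMap.IsIdempotentElem.isProj_range _ hidem).trace
  have hsum : (∑ i, Matrix.single i i 1 : Matrix ι ι k) = 1 := by
    rw [Matrix.sum_single_eq_diagonal, ← Matrix.diagonal_one]
  have h := congrArg (fun a => LinearMap.trace k V (φ a)) hsum
  simp only [map_sum, htrace, map_one, LinearMap.trace_one, Finset.sum_const, Finset.card_univ,
    nsmul_eq_mul] at h
  exact ⟨_, by exact_mod_cast h.symm⟩

end MatrixAlgebra

section Ergodic

variable {k E F H V : Type*} [Field k] [Ring E] [Algebra k E] [Ring F] [Algebra k F] [Group H]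
  [AddCommGroup V] [Module k V]

/-- An action of a group by algebra automorphisms is ergodic if its only fixed elements are the
scalars. This is what Schur's lemma says about conjugation on the commutant of a normal
subgroup. -/
def IsErgodic (α : H →* (E ≃ₐ[k] E)) : Prop :=
  ∀ b, (∀ h, α h b = b) → b ∈ (⊥ : Subalgebra k E)

theorem IsErgodic.autCongr {α : H →* (E ≃ₐ[k] E)} (hα : IsErgodic α) (Θ : E ≃ₐ[k] F) :
    IsErgodic ((AlgEquiv.autCongr Θ).toMonoidHom.comp α) := fun b hb => by
  obtain ⟨c, hc⟩ := Algebra.mem_bot.mp (hα (Θ.symm b) fun h => Θ.injective (by simpa using hb h))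
  exact Algebra.mem_bot.mpr ⟨c, by rw [← Θ.commutes, hc, Θ.apply_symm_apply]⟩

theorem IsErgodic.sum_mem_bot [Fintype H] {α : H →* (E ≃ₐ[k] E)} (hα : IsErgodic α) (b : E) :
    ∑ h, α h b ∈ (⊥ : Subalgebra k E) :=
  hα _ fun h => by
    rw [map_sum]
    exact Fintype.sum_equiv (Equiv.mulLeft h) _ _ fun g => by simp

theorem IsErgodic.sum_eq_algebraMap [Fintype H] [CharZero k] [FiniteDimensional k V] [Nontrivial V]
    {α : H →* (E ≃ₐ[k] E)} (hα : IsErgodic α) {φ : E →ₐ[k] End k V}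
    (htr : ∀ h b, LinearMap.trace k V (φ (α h b)) = LinearMap.trace k V (φ b)) (b : E) :
    ∑ h, α h b =
      algebraMap k E (Fintype.card H * LinearMap.trace k V (φ b) / finrank k V) := by
  obtain ⟨c, hc⟩ := Algebra.mem_bot.mp (hα.sum_mem_bot b)
  have htrace := congrArg (fun x => LinearMap.trace k V (φ x)) hc
  simp only [Algebra.algebraMap_eq_smul_one, map_smul, map_one, LinearMap.trace_one,
    smul_eq_mul, map_sum, htr, Finset.sum_const, Finset.card_univ, nsmul_eq_mul] at htrace
  rw [← htrace, mul_div_cancel_right₀ _ (Nat.cast_ne_zero.mpr finrank_pos.ne'), hc]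

theorem isIntegral_sum_algEquiv_apply_of_mem_center [Fintype H] (α : H →* (E ≃ₐ[k] E)) {z : E}
    (hz : z ∈ Subalgebra.center k E) (hint : IsIntegral ℤ z) : IsIntegral ℤ (∑ h, α h z) := by
  -- Sums of integral elements are integral in a commutative ring, here the center of `E`.
  let ι : Subalgebra.center k E →ₐ[ℤ] E := (Subalgebra.center k E).val.restrictScalars ℤ
  let y (h : H) : Subalgebra.center k E := ⟨α h z, MulEquivClass.apply_mem_center (α h) hz⟩
  have hy (h : H) : IsIntegral ℤ (y h) :=
    (isIntegral_algHom_iff ι Subtype.val_injective).mp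
      (hint.map ((α h).toAlgHom.restrictScalars ℤ))
  have hsum : ι (∑ h, y h) = ∑ h, α h z := map_sum ι _ _
  exact hsum ▸ (IsIntegral.sum _ fun h _ => hy h).map ι

theorem eq_zero_or_one_of_finrank_dvd_finrank_range [FiniteDimensional k V] {p : End k V}
    (hp : IsIdempotentElem p) (h : finrank k V ∣ finrank k (LinearMap.range p)) :
    p = 0 ∨ p = 1 := by
  rcases Nat.eq_zero_or_pos (finrank k (LinearMap.range p)) with h0 | hpos
  · exact Or.inl (LinearMap.range_eq_bot.mp (Submodule.finrank_eq_zero.mp h0))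
  · have htop : LinearMap.range p = ⊤ :=
      Submodule.eq_top_of_finrank_eq (le_antisymm (Submodule.finrank_le _) (Nat.le_of_dvd hpos h))
    exact Or.inr (LinearMap.ext fun x =>
      (LinearMap.IsIdempotentElem.isProj_range p hp).map_id x (htop ▸ Submodule.mem_top))

theorem IsErgodic.eq_zero_or_one_of_mem_center [Finite H] [CharZero k] [FiniteDimensional k V]
    {α : H →* (E ≃ₐ[k] E)} (hα : IsErgodic α) {φ : E →ₐ[k] End k V} (hφ : Function.Injective φ)
    (htr : ∀ h b, LinearMap.trace k V (φ (α h b)) = LinearMap.trace k V (φ b))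
    (hcop : (finrank k V).Coprime (Nat.card H)) {z : E} (hz : z ∈ Subalgebra.center k E)
    (hidem : IsIdempotentElem z) : z = 0 ∨ z = 1 := by
  have := Fintype.ofFinite H
  rcases subsingleton_or_nontrivial V with hV | hV
  · exact Or.inl (hφ (Subsingleton.elim _ _))
  have : Nontrivial E := φ.toRingHom.domain_nontrivial
  have hp : IsIdempotentElem (φ z) := hidem.map φ
  have hz_int : IsIntegral ℤ z :=
    ⟨.X ^ 2 - .X, Polynomial.monic_X_pow_sub (by simp), by simp [sq, hidem.eq]⟩
  have hint := isIntegral_sum_algEquiv_apply_of_mem_center α hz hz_int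
  rw [hα.sum_eq_algebraMap htr, isIntegral_algebraMap_iff (algebraMap k E).injective,
    (LinearMap.IsIdempotentElem.isProj_range _ hp).trace, ← Nat.cast_mul] at hint
  have hdvd : finrank k V ∣ finrank k (LinearMap.range (φ z)) :=
    hcop.dvd_of_dvd_mul_left (Nat.card_eq_fintype_card (α := H) ▸
      dvd_of_isIntegral_natCast_div finrank_pos.ne' hint)
  simpa only [map_eq_zero_iff φ hφ, map_eq_one_iff φ hφ] using
    eq_zero_or_one_of_finrank_dvd_finrank_range hp hdvd

theorem IsErgodic.finrank_eq_one_of_end [IsAlgClosed k] [CharZero k] [FiniteDimensional k V]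
    [Nontrivial V] [Finite H] {α : H →* (End k V ≃ₐ[k] End k V)} (hα : IsErgodic α)
    (hcop : (finrank k V).Coprime (Nat.card H)) : finrank k V = 1 := by
  obtain ⟨τ, rfl⟩ := exists_comp_eq_of_coprime (specialLinearConj_surjective k V)
    (hcop.coprime_dvd_left (card_ker_specialLinearConj_dvd k V)) α
  let ρ : Representation k H V := LinearEquiv.automorphismGroup.toLinearMapMonoidHom.comp
    (SpecialLinearGroup.toLinearEquiv.comp τ)
  have : NeZero (Nat.card H : k) := ⟨Nat.cast_ne_zero.mpr Nat.card_pos.ne'⟩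
  have : ρ.IsIrreducible :=
    isIrreducible_of_commutant_eq_bot <| eq_bot_iff.mpr fun f hf => hα f fun h =>
      LinearMap.ext fun x => by
        have hcomm : (τ h).1 (f ((τ h).1.symm x)) = f ((τ h).1 ((τ h).1.symm x)) :=
          LinearMap.congr_fun (hf (ρ h) ⟨h, rfl⟩) _
        rwa [LinearEquiv.apply_symm_apply] at hcomm
  exact Nat.eq_one_of_dvd_coprimes hcop dvd_rfl (finrank_dvd_card ρ)

theorem IsErgodic.finrank_eq_one [IsAlgClosed k] [CharZero k] [FiniteDimensional k E]
    [IsSemisimpleRing E] [Nontrivial E] [FiniteDimensional k V] [Finite H]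
    {α : H →* (E ≃ₐ[k] E)} (hα : IsErgodic α) {φ : E →ₐ[k] End k V} (hφ : Function.Injective φ)
    (htr : ∀ h b, LinearMap.trace k V (φ (α h b)) = LinearMap.trace k V (φ b))
    (hcop : (finrank k V).Coprime (Nat.card H)) : finrank k E = 1 := by
  obtain ⟨e, he, ⟨Θ⟩⟩ := exists_algEquiv_matrix_of_forall_isIdempotentElem_mem_center (k := k)
    (E := E) fun z hz => hα.eq_zero_or_one_of_mem_center hφ htr hcop hz
  have hdvd : e ∣ finrank k V := by
    simpa using card_dvd_finrank_of_algHom_matrix (φ.comp Θ.symm.toAlgHom)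
  let Θ' : E ≃ₐ[k] End k (Fin e → k) := Θ.trans Matrix.toLinAlgEquiv'
  have he1 : finrank k (Fin e → k) = 1 :=
    (hα.autCongr Θ').finrank_eq_one_of_end
      (by rw [finrank_fin_fun]; exact hcop.coprime_dvd_left hdvd)
  rw [Θ'.toLinearEquiv.finrank_eq, finrank_linearMap, he1, mul_one]

end Ergodic

section Clifford

/-- The conjugation action of a group, mapped to the units of an algebra by `u`, on a subalgebra
stable under it. The values are endomorphisms rather than automorphisms: invertibility comes for
free from `MonoidHom.toHomUnits`. -/
def conjHom {k A G : Type*} [CommRing k] [Ring A] [Algebra k A] [Group G] (u : G →* A)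
    (S : Subalgebra k A) (hS : ∀ g, ∀ b ∈ S, u g * b * u g⁻¹ ∈ S) : G →* (S →ₐ[k] S) :=
  have hinv (g : G) : u g * u g⁻¹ = 1 := by rw [← map_mul, mul_inv_cancel, map_one]
  have hcancel (g : G) (x : A) : u g⁻¹ * (u g * x) = x := by
    rw [← mul_assoc, ← map_mul, inv_mul_cancel, map_one, one_mul]
  { toFun g :=
      { toFun b := ⟨u g * b * u g⁻¹, hS g b b.2⟩
        map_one' := Subtype.ext (by simp [hinv])
        map_mul' a b := Subtype.ext (by simp [mul_assoc, hcancel])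
        map_zero' := Subtype.ext (by simp)
        map_add' a b := Subtype.ext (by simp [mul_add, add_mul])
        commutes' c := Subtype.ext (by simp [← Algebra.commutes, mul_assoc, hinv]) }
    map_one' := AlgHom.ext fun b => Subtype.ext (by simp)
    map_mul' g h := AlgHom.ext fun b => Subtype.ext (by simp [mul_assoc]) }

variable {k G V : Type*} [Field k] [Group G] [AddCommGroup V] [Module k V]
  (ρ : Representation k G V) (N : Subgroup G) [N.Normal]

theorem conj_mem_commutant_comp_subtype (g : G) {b : End k V}
    (hb : b ∈ commutant (ρ.comp N.subtype)) :
    ρ g * b * ρ g⁻¹ ∈ commutant (ρ.comp N.subtype) := by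
  rintro _ ⟨n, rfl⟩
  have hn : ρ (g⁻¹ * n * g) * b = b * ρ (g⁻¹ * n * g) :=
    hb _ ⟨⟨g⁻¹ * n * g, by simpa using Subgroup.Normal.conj_mem ‹N.Normal› _ n.2 g⁻¹⟩, rfl⟩
  calc ρ n * (ρ g * b * ρ g⁻¹) = ρ g * (ρ (g⁻¹ * n * g) * b) * ρ g⁻¹ := by
        simp only [← mul_assoc, ← map_mul, mul_inv_cancel, one_mul]
    _ = ρ g * (b * ρ (g⁻¹ * n * g)) * ρ g⁻¹ := by rw [hn]
    _ = ρ g * b * ρ g⁻¹ * ρ n := by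
        simp only [mul_assoc, ← map_mul, mul_inv_cancel, mul_one]

/-- The action of `G ⧸ N` on the commutant of the restriction of `ρ` to a normal subgroup `N`,
induced by conjugation by the operators `ρ g`. -/
def quotientConj :
    G ⧸ N →* (commutant (ρ.comp N.subtype) ≃ₐ[k] commutant (ρ.comp N.subtype)) :=
  (AlgEquiv.algHomUnitsEquiv k _).toMonoidHom.comp <| MonoidHom.toHomUnits <|
    QuotientGroup.lift N
      (conjHom ρ _ fun g _ => conj_mem_commutant_comp_subtype ρ N g) fun n hn =>
        AlgHom.ext fun b => Subtype.ext <| by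
          change ρ n * b * ρ n⁻¹ = b
          rw [b.2 (ρ n) ⟨⟨n, hn⟩, rfl⟩, mul_assoc, ← map_mul, mul_inv_cancel, map_one, mul_one]

theorem coe_quotientConj_mk (g : G) (b : commutant (ρ.comp N.subtype)) :
    (quotientConj ρ N g b : End k V) = ρ g * b * ρ g⁻¹ := rfl

theorem trace_quotientConj (x : G ⧸ N) (b : commutant (ρ.comp N.subtype)) :
    LinearMap.trace k V (quotientConj ρ N x b) = LinearMap.trace k V b := by
  obtain ⟨g, rfl⟩ := QuotientGroup.mk_surjective x
  rw [coe_quotientConj_mk, LinearMap.trace_mul_comm, ← mul_assoc, ← map_mul, inv_mul_cancel,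
    map_one, one_mul]

theorem isErgodic_quotientConj [IsAlgClosed k] [FiniteDimensional k V] [ρ.IsIrreducible] :
    IsErgodic (quotientConj ρ N) := by
  intro b hb
  have hmem : (b : End k V) ∈ commutant ρ := by
    rintro _ ⟨g, rfl⟩
    have hconj : ρ g * b * ρ g⁻¹ = b := congrArg Subtype.val (hb g)
    calc ρ g * b = ρ g * b * ρ g⁻¹ * ρ g := by
          rw [mul_assoc _ (ρ g⁻¹), ← map_mul, inv_mul_cancel, map_one, mul_one]
      _ = b * ρ g := by rw [hconj]
  obtain ⟨c, hc⟩ := Algebra.mem_bot.mp (commutant_eq_bot ρ ▸ hmem)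
  exact Algebra.mem_bot.mpr ⟨c, Subtype.ext hc⟩

theorem isIrreducible_comp_subtype_of_coprime [IsAlgClosed k] [CharZero k] [FiniteDimensional k V]
    [Finite G] [ρ.IsIrreducible] (hcop : (finrank k V).Coprime N.index) :
    Representation.IsIrreducible (ρ.comp N.subtype) := by
  have := nontrivial_of_isIrreducible ρ
  have : NeZero (Nat.card N : k) := ⟨Nat.cast_ne_zero.mpr Nat.card_pos.ne'⟩
  have := isSemisimpleRing_commutant (ρ.comp N.subtype)
  have hfinrank : finrank k (commutant (ρ.comp N.subtype)) = 1 :=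
    (isErgodic_quotientConj ρ N).finrank_eq_one (φ := Subalgebra.val _) Subtype.val_injective
      (trace_quotientConj ρ N) hcop
  exact isIrreducible_of_commutant_eq_bot (Subalgebra.finrank_eq_one_iff.mp hfinrank)

end Clifford

section Characters

open scoped ComplexOrder in
theorem exists_units_conjTranspose_mul_eq_mul_inv {ι 𝕜 G : Type*} [Fintype ι] [DecidableEq ι]
    [RCLike 𝕜] [Group G] [Finite G] (f : G →* Matrix ι ι 𝕜) :
    ∃ u : (Matrix ι ι 𝕜)ˣ, ∀ g, (f g).conjTranspose * u = u * f g⁻¹ := by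
  -- `u` is the Gram matrix of an invariant Hermitian form.
  have := Fintype.ofFinite G
  let P := ∑ x, (f x).conjTranspose * f x
  have hpos : P.PosDef := by
    rw [show P = _ from (Finset.add_sum_erase _ _ (Finset.mem_univ 1)).symm]
    refine Matrix.PosDef.add_posSemidef ?_
      (Matrix.posSemidef_sum _ fun x _ => Matrix.posSemidef_conjTranspose_mul_self _)
    simpa using Matrix.PosDef.one
  have hinv (g : G) : (f g).conjTranspose * P * f g = P := by
    simp only [P, Finset.mul_sum, Finset.sum_mul]
    refine Fintype.sum_equiv (Equiv.mulRight g) _ _ fun x => ?_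
    simp only [Equiv.coe_mulRight, map_mul, Matrix.conjTranspose_mul, mul_assoc]
  obtain ⟨u, hu⟩ := hpos.isUnit
  refine ⟨u, fun g => ?_⟩
  rw [hu]
  nth_rw 2 [← hinv g]
  rw [mul_assoc _ (f g), ← map_mul, mul_inv_cancel, map_one, mul_one]

theorem character_inv {𝕜 G V : Type*} [RCLike 𝕜] [Group G] [Finite G] [AddCommGroup V]
    [Module 𝕜 V] [FiniteDimensional 𝕜 V] (ρ : Representation 𝕜 G V) (g : G) :
    ρ.character g⁻¹ = starRingEnd 𝕜 (ρ.character g) := by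
  let b := Module.finBasis 𝕜 V
  let f : G →* Matrix (Fin (finrank 𝕜 V)) (Fin (finrank 𝕜 V)) 𝕜 :=
    (LinearMap.toMatrixAlgEquiv b).toMulEquiv.toMonoidHom.comp ρ
  have hf (g : G) : ρ.character g = (f g).trace := LinearMap.trace_eq_matrix_trace 𝕜 b (ρ g)
  obtain ⟨u, hu⟩ := exists_units_conjTranspose_mul_eq_mul_inv f
  have hconj : f g⁻¹ = (u⁻¹ : (Matrix _ _ 𝕜)ˣ).val * (f g).conjTranspose * u := by
    rw [mul_assoc, hu, Units.inv_mul_cancel_left]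
  rw [hf, hf, hconj, Matrix.trace_units_conj', Matrix.trace_conjTranspose]
  rfl

section Cdot

variable {G V : Type*} [Group G] [Finite G] [AddCommGroup V] [Module ℂ V] [FiniteDimensional ℂ V]

theorem cdot_character_self (ρ : Representation ℂ G V) :
    cdot G ρ.character ρ.character = finrank ℂ (IntertwiningMap ρ ρ) := by
  have := Fintype.ofFinite G
  have := invertibleOfNonzero (Nat.cast_ne_zero.mpr Nat.card_pos.ne' : (Nat.card G : ℂ) ≠ 0)
  rw [← card_inv_mul_sum_char_mul_char_eq_finrank ρ ρ, cdot, finsum_eq_sum_of_fintype]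
  simp only [character_inv]

theorem cdot_character_self_eq_one_iff {ρ : Representation ℂ G V} :
    cdot G ρ.character ρ.character = 1 ↔ ρ.IsIrreducible := by
  rw [cdot_character_self, Nat.cast_eq_one]
  refine ⟨fun h => ?_, fun _ => IsIrreducible.finrank_intertwiningMap_self ρ⟩
  rw [(intertwiningMapEquivCommutant ρ).toLinearEquiv.finrank_eq] at h
  have : Nontrivial V := by
    by_contra hV
    rw [not_nontrivial_iff_subsingleton] at hV
    have := Module.nontrivial_of_finrank_eq_succ h
    exact not_subsingleton (commutant ρ) Subtype.val_injective.subsingleton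
  have : NeZero (Nat.card G : ℂ) := ⟨Nat.cast_ne_zero.mpr Nat.card_pos.ne'⟩
  exact isIrreducible_of_commutant_eq_bot (Subalgebra.finrank_eq_one_iff.mp h)

end Cdot

theorem isChar_iff_exists_character {G : Type*} [Group G] {χ : G → ℂ} :
    IsChar G χ ↔ ∃ (n : ℕ) (ρ : Representation ℂ G (Fin n → ℂ)), χ = ρ.character := by
  refine exists_congr fun n => ⟨?_, ?_⟩
  · rintro ⟨ρ, rfl⟩
    exact ⟨(Matrix.toLinAlgEquiv' (R := ℂ) (n := Fin n)).toMulEquiv.toMonoidHom.comp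
      ((Units.coeHom _).comp ρ), funext fun g => (Matrix.trace_toLin'_eq _).symm⟩
  · rintro ⟨ρ, rfl⟩
    exact ⟨((LinearMap.toMatrixAlgEquiv' (R := ℂ) (n := Fin n)).toMulEquiv.toMonoidHom.comp
      ρ).toHomUnits,
      funext fun g => LinearMap.trace_eq_matrix_trace ℂ (Pi.basisFun ℂ (Fin n)) (ρ g)⟩

theorem isIrrChar_iff_exists_isIrreducible {G : Type*} [Group G] [Finite G] {χ : G → ℂ} :
    IsIrrChar G χ ↔
      ∃ (n : ℕ) (ρ : Representation ℂ G (Fin n → ℂ)), ρ.IsIrreducible ∧ χ = ρ.character := by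
  rw [IsIrrChar, isChar_iff_exists_character]
  constructor
  · rintro ⟨⟨n, ρ, rfl⟩, h⟩
    exact ⟨n, ρ, cdot_character_self_eq_one_iff.mp h, rfl⟩
  · rintro ⟨n, ρ, hρ, rfl⟩
    exact ⟨⟨n, ρ, rfl⟩, cdot_character_self_eq_one_iff.mpr hρ⟩

end Characters

theorem stmt7 (G : Type*) [Group G] [Finite G] (N : Subgroup G) [N.Normal]
    (χ : G → ℂ) (hχ : IsIrrChar G χ) (d : ℕ) (hd : χ 1 = d)
    (hcop : Nat.Coprime d N.index) :
    IsIrrChar N (res N χ) := by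
  obtain ⟨n, ρ, hρ, rfl⟩ := isIrrChar_iff_exists_isIrreducible.mp hχ
  obtain rfl : finrank ℂ (Fin n → ℂ) = d := Nat.cast_injective (ρ.char_one.symm.trans hd)
  exact isIrrChar_iff_exists_isIrreducible.mpr
    ⟨n, ρ.comp N.subtype, isIrreducible_comp_subtype_of_coprime ρ N hcop, rfl⟩
end

section
/- Let N_1 ⊴ G_1 and N_2 ⊴ G_2 be finite groups. Then G_1 is relative almost monomial with respect to N_1 and G_2 is relative almost monomial with respect to N_2 if and only if G_1 × G_2 is relative almost monomial with respect to N_1 × N_2. -/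
open scoped Classical

/-!
Let `p : A → B` be a surjective homomorphism, `χ` an irreducible character of `A` and `α` a
character of `A` such that `|α|²` averages to `1` on the fibres of `p`. The fibre average `u` of
`χ * conj α` is a character of `B`, afforded by the `ker p`-invariants of a tensor product, and
`χ - α * (u ∘ p)` is orthogonal to `α * (u ∘ p)`. Hence, if `u ≠ 0`, then `u` is irreducible and
`χ = α * (u ∘ p)`.

Applied to `G₁ × G₂ → G₂`, with `α` inflated from a constituent of the restriction of `χ` to `G₁`,
this shows that `χ` is a product. If `χ₁ × χ₂ ≠ φ₁ × φ₂`, a product of two characters separates them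
as soon as one factor separates the characters in that coordinate and the other factor is a
constituent; the latter is found by separating from the trivial character. Applied to `H → p(H)`
with `α = 1`, it shows that a character of `H` separating `χ ∘ p` from `φ ∘ p` is inflated from
`p(H)`, where it separates `χ` from `φ`; so relative almost monomiality passes to quotients, in
particular to both factors.
-/

section Character

open Representation

variable {G H : Type*} [Group G] [Group H] {f g : G → ℂ}

theorem isChar_character {V : Type*} [AddCommGroup V] [Module ℂ V] [FiniteDimensional ℂ V]
    (ρ : Representation ℂ G V) : IsChar G ρ.character := by
  let b := Module.finBasis ℂ V
  refine ⟨_, ((LinearMap.toMatrixAlgEquiv b).toRingEquiv.toRingHom.toMonoidHom.comp ρ).toHomUnits,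
    funext fun g => ?_⟩
  exact LinearMap.trace_eq_matrix_trace ℂ b (ρ g)

theorem IsChar.exists_representation (hf : IsChar G f) :
    ∃ (n : ℕ) (ρ : Representation ℂ G (Fin n → ℂ)), ρ.character = f := by
  obtain ⟨n, ρ, rfl⟩ := hf
  let toEnd := (Matrix.toLinAlgEquiv' : Matrix (Fin n) (Fin n) ℂ ≃ₐ[ℂ] _).toMulEquiv.toMonoidHom
  exact ⟨n, toEnd.comp ((Units.coeHom _).comp ρ), funext fun g => Matrix.trace_toLin'_eq _⟩

theorem isChar_one (G : Type*) [Group G] : IsChar G 1 :=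
  ⟨1, 1, by funext g; simp⟩

theorem IsChar.comp (hf : IsChar G f) (p : H →* G) : IsChar H (f ∘ p) := by
  obtain ⟨n, ρ, rfl⟩ := hf
  exact ⟨n, ρ.comp p, rfl⟩

theorem IsChar.mul (hf : IsChar G f) (hg : IsChar G g) : IsChar G (f * g) := by
  obtain ⟨n, ρ, rfl⟩ := hf.exists_representation
  obtain ⟨m, σ, rfl⟩ := hg.exists_representation
  rw [← char_tensor]
  exact isChar_character _

theorem IsChar.star (hf : IsChar G f) : IsChar G (star f) := by
  obtain ⟨n, ρ, rfl⟩ := hf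
  refine ⟨n, (Matrix.GeneralLinearGroup.map (starRingEnd ℂ)).comp ρ, funext fun g => ?_⟩
  simp [Matrix.trace]

theorem IsChar.apply_conj (hf : IsChar G f) (x y : G) : f (x * y * x⁻¹) = f y := by
  obtain ⟨n, ρ, rfl⟩ := hf.exists_representation
  exact ρ.char_conj y x

theorem IsChar.eq_zero_of_apply_one (hf : IsChar G f) (h : f 1 = 0) : f = 0 := by
  obtain ⟨n, ρ, rfl⟩ := hf
  obtain rfl : n = 0 := by simpa using h
  funext g
  exact Matrix.trace_fin_zero _

open scoped ComplexOrder in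
theorem exists_posDef_invariant [Finite G] {ι : Type*} [Fintype ι] [DecidableEq ι]
    (ρ : G →* Matrix.GeneralLinearGroup ι ℂ) :
    ∃ P : Matrix ι ι ℂ, P.PosDef ∧
      ∀ g, (ρ g : Matrix ι ι ℂ) * P * (ρ g : Matrix ι ι ℂ).conjTranspose = P := by
  have := Fintype.ofFinite G
  refine ⟨∑ x, (ρ x : Matrix ι ι ℂ) * (ρ x : Matrix ι ι ℂ).conjTranspose, ?_, fun g => ?_⟩
  · exact Matrix.posDef_sum Finset.univ_nonempty fun x _ =>
      .mul_conjTranspose_self _ (Matrix.vecMul_injective_of_isUnit (ρ x).isUnit)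
  · simp only [Finset.mul_sum, Finset.sum_mul]
    refine Fintype.sum_equiv (Equiv.mulLeft g) _ _ fun x => ?_
    simp [Matrix.mul_assoc]

theorem trace_inv_eq_star_trace {ι R : Type*} [Fintype ι] [DecidableEq ι] [CommRing R] [StarRing R]
    (M : Matrix.GeneralLinearGroup ι R) {P : Matrix ι ι R} (hP : IsUnit P)
    (h : (M : Matrix ι ι R) * P * (M : Matrix ι ι R).conjTranspose = P) :
    (M⁻¹ : Matrix.GeneralLinearGroup ι R).1.trace = star M.1.trace := by
  obtain ⟨P, rfl⟩ := hP
  have hM : (M⁻¹ : Matrix.GeneralLinearGroup ι R).1 =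
      P * (M : Matrix ι ι R).conjTranspose * (P⁻¹ : Matrix.GeneralLinearGroup ι R).1 := by
    rw [Units.eq_mul_inv_iff_mul_eq, Units.inv_mul_eq_iff_eq_mul, ← Matrix.mul_assoc, h]
  rw [hM, Matrix.trace_mul_comm, Units.inv_mul_cancel_left, Matrix.trace_conjTranspose]

open scoped ComplexOrder in
theorem IsChar.apply_inv [Finite G] (hf : IsChar G f) (x : G) : f x⁻¹ = starRingEnd ℂ (f x) := by
  obtain ⟨n, ρ, rfl⟩ := hf
  obtain ⟨P, hP, hρ⟩ := exists_posDef_invariant ρ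
  calc (ρ x⁻¹).1.trace
      = ((ρ x)⁻¹ : Matrix.GeneralLinearGroup (Fin n) ℂ).1.trace := by rw [map_inv]
    _ = starRingEnd ℂ (ρ x).1.trace := trace_inv_eq_star_trace (ρ x) hP.isUnit (hρ x)

end Character

section InnerProduct

variable {G : Type*} [Group G] [Finite G]

theorem cdot_eq_sum [Fintype G] (f h : G → ℂ) :
    cdot G f h = (Nat.card G : ℂ)⁻¹ * ∑ g, f g * starRingEnd ℂ (h g) := by
  rw [cdot, finsum_eq_sum_of_fintype]

theorem cdot_sub_left (f₁ f₂ h : G → ℂ) : cdot G (f₁ - f₂) h = cdot G f₁ h - cdot G f₂ h := by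
  have := Fintype.ofFinite G
  simp [cdot_eq_sum, sub_mul, mul_sub]

theorem conj_cdot (f h : G → ℂ) : starRingEnd ℂ (cdot G f h) = cdot G h f := by
  have := Fintype.ofFinite G
  simp [cdot_eq_sum, mul_comm]

theorem cdot_sub_right (f h₁ h₂ : G → ℂ) : cdot G f (h₁ - h₂) = cdot G f h₁ - cdot G f h₂ := by
  rw [← conj_cdot, cdot_sub_left, map_sub, conj_cdot, conj_cdot]

theorem cdot_mul_right (a f h : G → ℂ) : cdot G f (a * h) = cdot G (f * star a) h := by
  have := Fintype.ofFinite G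
  simp [cdot_eq_sum, mul_assoc]

theorem cdot_self_eq_sum [Fintype G] (f : G → ℂ) :
    cdot G f f = ((Nat.card G : ℝ)⁻¹ * ∑ g, ‖f g‖ ^ 2 : ℝ) := by
  simp [cdot_eq_sum, Complex.mul_conj']

theorem cdot_self_re_nonneg (f : G → ℂ) : 0 ≤ (cdot G f f).re := by
  have := Fintype.ofFinite G
  rw [cdot_self_eq_sum, Complex.ofReal_re]
  positivity

theorem cdot_self_eq_zero_iff {f : G → ℂ} : cdot G f f = 0 ↔ f = 0 := by
  have := Fintype.ofFinite G
  rw [cdot_self_eq_sum, Complex.ofReal_eq_zero]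
  simp [Finset.sum_eq_zero_iff_of_nonneg, funext_iff]

-- `χ - θ` is orthogonal to `θ`, so `1 = ‖χ - θ‖² + n` with `n ≥ 1`.
theorem eq_of_cdot_eq_cdot_self {χ θ : G → ℂ} {n : ℕ} (hχ : cdot G χ χ = 1)
    (hχθ : cdot G χ θ = cdot G θ θ) (hθ : cdot G θ θ = n) (hθ0 : θ ≠ 0) : χ = θ := by
  have hθχ : cdot G θ χ = n := by rw [← conj_cdot, hχθ, hθ, map_natCast]
  have hsub : cdot G (χ - θ) (χ - θ) = 1 - n := by
    simp only [cdot_sub_left, cdot_sub_right, hχ, hχθ, hθ, hθχ, sub_self, sub_zero]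
  have hn0 : n ≠ 0 := by
    rintro rfl
    exact hθ0 (cdot_self_eq_zero_iff.mp (by rw [hθ, Nat.cast_zero]))
  have hn1 : n ≤ 1 := by
    have h := cdot_self_re_nonneg (χ - θ)
    rw [hsub] at h
    exact_mod_cast (show (n : ℝ) ≤ 1 by simpa using h)
  obtain rfl : n = 1 := by omega
  rw [← sub_eq_zero, ← cdot_self_eq_zero_iff, hsub, Nat.cast_one, sub_self]

end InnerProduct

section Constituent

open Representation

/-- Subrepresentations of a subrepresentation `a` of `ρ` are the subrepresentations of `ρ`
contained in `a`; the analogue for representations of `Submodule.mapIic`. -/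
def subrepresentationMapIic {k G V : Type*} [Semiring k] [Monoid G] [AddCommMonoid V] [Module k V]
    {ρ : Representation k G V} (a : Subrepresentation ρ) :
    Subrepresentation a.toRepresentation ≃o Set.Iic a where
  toFun b := ⟨⟨b.toSubmodule.map a.toSubmodule.subtype, by
    rintro g _ ⟨v, hv, rfl⟩
    exact ⟨_, b.apply_mem_toSubmodule g hv, rfl⟩⟩, Submodule.map_subtype_le _ _⟩
  invFun c := ⟨c.1.toSubmodule.comap a.toSubmodule.subtype, fun g _ hv =>
    c.1.apply_mem_toSubmodule g hv⟩
  left_inv b := Subrepresentation.toSubmodule_injective <|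
    Submodule.comap_map_eq_of_injective a.toSubmodule.injective_subtype b.toSubmodule
  right_inv c := Subtype.ext <| Subrepresentation.toSubmodule_injective <|
    (Submodule.map_comap_subtype _ _).trans (inf_of_le_right c.2)
  map_rel_iff' := Submodule.map_le_map_iff_of_injective a.toSubmodule.injective_subtype _ _

variable {k G V W : Type*} [Field k] [AddCommGroup V] [Module k V] [FiniteDimensional k V]

theorem exists_isIrreducible_toRepresentation [Monoid G] [Nontrivial V]
    (ρ : Representation k G V) :
    ∃ a : Subrepresentation ρ, a.toRepresentation.IsIrreducible := by
  have : WellFoundedLT (Subrepresentation ρ) :=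
    StrictMono.wellFoundedLT (f := Subrepresentation.toSubmodule (ρ := ρ)) fun _ _ h => h
  have htop : (⊤ : Subrepresentation ρ) ≠ ⊥ := fun h =>
    top_ne_bot (congrArg Subrepresentation.toSubmodule h)
  obtain ⟨a, ha, -⟩ := (eq_bot_or_exists_atom_le (⊤ : Subrepresentation ρ)).resolve_left htop
  exact ⟨a, (subrepresentationMapIic a).isSimpleOrder_iff.mpr
    (Set.isSimpleOrder_Iic_iff_isAtom.mpr ha)⟩

theorem finrank_intertwiningMap_ne_zero [Group G] [AddCommGroup W] [Module k W]
    [FiniteDimensional k W] {ρ : Representation k G V} {σ : Representation k G W}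
    {f : ρ.IntertwiningMap σ} (hf : f ≠ 0) : Module.finrank k (ρ.IntertwiningMap σ) ≠ 0 := by
  have := Module.Finite.equiv (invariantsEquivIntertwiningMap ρ σ)
  have := nontrivial_of_ne f 0 hf
  exact Module.finrank_pos.ne'

variable [Group G] [Finite G]

theorem cdot_character [Module ℂ V] [FiniteDimensional ℂ V] [AddCommGroup W] [Module ℂ W]
    [FiniteDimensional ℂ W] (ρ : Representation ℂ G V) (σ : Representation ℂ G W) :
    cdot G σ.character ρ.character = Module.finrank ℂ (ρ.IntertwiningMap σ) := by
  have := Fintype.ofFinite G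
  have : Invertible (Nat.card G : ℂ) := invertibleOfNonzero (Nat.cast_ne_zero.mpr Nat.card_pos.ne')
  simp only [← card_inv_mul_sum_char_mul_char_eq_finrank, cdot_eq_sum,
    (isChar_character ρ).apply_inv]

theorem IsChar.exists_cdot_eq_natCast {f h : G → ℂ} (hf : IsChar G f) (hh : IsChar G h) :
    ∃ n : ℕ, cdot G f h = n := by
  obtain ⟨_, ρ, rfl⟩ := hf.exists_representation
  obtain ⟨_, σ, rfl⟩ := hh.exists_representation
  exact ⟨_, cdot_character σ ρ⟩

theorem isIrrChar_character [Module ℂ V] [FiniteDimensional ℂ V] (ρ : Representation ℂ G V)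
    [ρ.IsIrreducible] : IsIrrChar G ρ.character :=
  ⟨isChar_character ρ, by
    rw [cdot_character, IsIrreducible.finrank_intertwiningMap_self, Nat.cast_one]⟩

theorem isIrrChar_one (G : Type*) [Group G] [Finite G] : IsIrrChar G 1 := by
  have := Fintype.ofFinite G
  exact ⟨isChar_one G, by simp [cdot_eq_sum]⟩

theorem IsIrrChar.ne_zero {f : G → ℂ} (hf : IsIrrChar G f) : f ≠ 0 := fun h =>
  one_ne_zero (hf.2.symm.trans (cdot_self_eq_zero_iff.mpr h))

theorem IsChar.exists_isIrrChar_cdot_ne_zero {f : G → ℂ} (hf : IsChar G f) (hf0 : f ≠ 0) :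
    ∃ α, IsIrrChar G α ∧ cdot G f α ≠ 0 := by
  obtain ⟨n, ρ, rfl⟩ := hf.exists_representation
  have : Nontrivial (Fin n → ℂ) := by
    by_contra h
    rw [not_nontrivial_iff_subsingleton] at h
    exact hf0 (funext fun g => by
      rw [character, Subsingleton.elim (ρ g) 0, map_zero, Pi.zero_apply])
  obtain ⟨a, ha⟩ := exists_isIrreducible_toRepresentation ρ
  let incl : a.toRepresentation.IntertwiningMap ρ := ⟨a.toSubmodule.subtype, fun _ => rfl⟩
  have : Nontrivial a.toSubmodule :=
    IsSimpleModule.nontrivial (MonoidAlgebra ℂ G) a.toRepresentation.asModule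
  have hincl : incl ≠ 0 := fun h => by
    obtain ⟨v, hv⟩ := exists_ne (0 : a.toSubmodule)
    exact hv (Subtype.ext (DFunLike.congr_fun h v))
  refine ⟨a.toRepresentation.character, isIrrChar_character _, ?_⟩
  rw [cdot_character, Nat.cast_ne_zero]
  exact finrank_intertwiningMap_ne_zero hincl

end Constituent

section Pushforward

/-- The pushforward of `f : A → ℂ` along `p : A → B`: the sum of `f` over the fibres of `p`, scaled
by `|B| / |A|` so that it is adjoint to `h ↦ h ∘ p` for the inner products `cdot`. For a surjective
homomorphism it averages over the fibres, for the inclusion of a subgroup it is the extension by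
zero scaled by the index. -/
noncomputable def pushforward {A B : Type*} (p : A → B) (f : A → ℂ) : B → ℂ :=
  fun b => (Nat.card B / Nat.card A : ℂ) * ∑ᶠ a, if p a = b then f a else 0

theorem pushforward_apply {A B : Type*} [Fintype A] (p : A → B) (f : A → ℂ) (b : B) :
    pushforward p f b = (Nat.card B / Nat.card A : ℂ) * ∑ a with p a = b, f a := by
  rw [pushforward, finsum_eq_sum_of_fintype, Finset.sum_filter]

theorem pushforward_mul_comp {A B : Type*} [Finite A] (p : A → B) (f : A → ℂ) (h : B → ℂ) :
    pushforward p (f * (h ∘ p)) = pushforward p f * h := by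
  have := Fintype.ofFinite A
  funext b
  rw [Pi.mul_apply, pushforward_apply, pushforward_apply, mul_assoc, Finset.sum_mul]
  refine congrArg _ (Finset.sum_congr rfl fun a ha => ?_)
  rw [Pi.mul_apply, Function.comp_apply, (Finset.mem_filter.mp ha).2]

variable {A B : Type*} [Group A] [Finite A] [Group B] [Finite B]

theorem cdot_comp_right (p : A → B) (f : A → ℂ) (h : B → ℂ) :
    cdot A f (h ∘ p) = cdot B (pushforward p f) h := by
  have := Fintype.ofFinite A
  have := Fintype.ofFinite B
  have hB : (Nat.card B : ℂ) ≠ 0 := Nat.cast_ne_zero.mpr Nat.card_pos.ne'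
  have hfiber (b : B) : pushforward p f b * starRingEnd ℂ (h b) =
      (Nat.card B / Nat.card A : ℂ) * ∑ a with p a = b, f a * starRingEnd ℂ ((h ∘ p) a) := by
    rw [← pushforward_apply]
    exact (congrFun (pushforward_mul_comp p f (star h)) b).symm
  rw [cdot_eq_sum, cdot_eq_sum, Finset.sum_congr rfl fun b _ => hfiber b, ← Finset.mul_sum,
    Finset.sum_fiberwise Finset.univ p, ← mul_assoc, ← mul_div_assoc, inv_mul_cancel₀ hB, one_div]

section Surjective

variable {p : A →* B} (hp : Function.Surjective p)

include hp

theorem pushforward_apply_map [Fintype p.ker] (f : A → ℂ) (a : A) :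
    pushforward p f (p a) = (Nat.card p.ker : ℂ)⁻¹ * ∑ k : p.ker, f (a * k) := by
  have := Fintype.ofFinite A
  have hsum : ∑ x with p x = p a, f x = ∑ k : p.ker, f (a * k) := by
    rw [Finset.sum_filter, ← Equiv.sum_comp (Equiv.mulLeft a), ← Finset.sum_filter]
    exact Finset.sum_subtype _ (by simp [MonoidHom.mem_ker]) _
  have hcard : Nat.card p.ker * Nat.card B = Nat.card A := by
    rw [← p.ker.card_mul_index, Subgroup.index_ker, p.range_eq_top.mpr hp, Subgroup.card_top]
  have hB : (Nat.card B : ℂ) ≠ 0 := Nat.cast_ne_zero.mpr Nat.card_pos.ne'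
  rw [pushforward_apply, hsum, ← hcard, Nat.cast_mul, div_mul_cancel_right₀ hB]

theorem pushforward_one : pushforward p 1 = 1 := by
  have := Fintype.ofFinite p.ker
  funext b
  obtain ⟨a, rfl⟩ := hp b
  simp only [pushforward_apply_map hp, Pi.one_apply, Finset.sum_const, Finset.card_univ, nsmul_one,
    Nat.card_eq_fintype_card]
  exact inv_mul_cancel₀ (Nat.cast_ne_zero.mpr Fintype.card_ne_zero)

theorem pushforward_comp (h : B → ℂ) : pushforward p (h ∘ p) = h := by
  rw [← one_mul (h ∘ p), pushforward_mul_comp, pushforward_one hp, one_mul]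

theorem cdot_comp_comp (f h : B → ℂ) : cdot A (f ∘ p) (h ∘ p) = cdot B f h := by
  rw [cdot_comp_right, pushforward_comp hp]

end Surjective

open Representation in
theorem character_toInvariants {k G V : Type*} [Field k] [Group G] [AddCommGroup V] [Module k V]
    [FiniteDimensional k V] (ρ : Representation k G V) (S : Subgroup G) [S.Normal] [Fintype S]
    [Invertible (Fintype.card S : k)] (g : G) :
    (ρ.toInvariants S).character g = (Nat.card S : k)⁻¹ * ∑ s : S, ρ.character (g * s) := by
  let τ : Representation k S V := ρ.comp S.subtype
  have hτ (v : V) : (ρ g ∘ₗ τ.averageMap) v ∈ invariants τ :=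
    le_comap_invariants ρ S g (τ.averageMap_invariant v)
  have hrestrict : ρ.toInvariants S g = (ρ g ∘ₗ τ.averageMap).restrict fun v _ => hτ v := by
    ext v
    exact congrArg (ρ g) (τ.averageMap_id v v.2).symm
  rw [character, hrestrict, LinearMap.trace_restrict_eq_of_forall_mem _ _ hτ,
    Nat.card_eq_fintype_card]
  simp [GroupAlgebra.average, τ, character, map_sum, ← Module.End.mul_eq_comp, Finset.mul_sum]

open Representation in
theorem IsChar.pushforward {p : A →* B} (hp : Function.Surjective p) {f : A → ℂ}
    (hf : IsChar A f) : IsChar B (pushforward p f) := by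
  obtain ⟨n, ρ, rfl⟩ := hf.exists_representation
  have := Fintype.ofFinite p.ker
  have : Invertible (Fintype.card p.ker : ℂ) := invertibleOfNonzero (by simp)
  let e := QuotientGroup.quotientKerEquivOfSurjective p hp
  let σ : Representation ℂ B _ := (quotientToInvariants ρ p.ker).comp e.symm.toMonoidHom
  suffices σ.character = _root_.pushforward p ρ.character from this ▸ isChar_character σ
  funext b
  obtain ⟨a, rfl⟩ := hp b
  have hσ : σ (p a) = ρ.toInvariants p.ker a :=
    congrArg (quotientToInvariants ρ p.ker) (e.symm_apply_apply (a : A ⧸ p.ker))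
  rw [character, hσ, pushforward_apply_map hp, ← character_toInvariants]
  rfl

theorem isIrrChar_comp_iff {p : A →* B} (hp : Function.Surjective p) {f : B → ℂ} :
    IsIrrChar A (f ∘ p) ↔ IsIrrChar B f := by
  rw [IsIrrChar, IsIrrChar, cdot_comp_comp hp]
  refine and_congr_left' ⟨fun h => ?_, fun h => h.comp p⟩
  rw [← pushforward_comp hp f]
  exact h.pushforward hp

theorem IsIrrChar.eq_mul_pushforward_comp {p : A →* B} (hp : Function.Surjective p) {χ α : A → ℂ}
    (hχ : IsIrrChar A χ) (hα : IsChar A α) (hα1 : pushforward p (α * star α) = 1)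
    (h0 : pushforward p (χ * star α) ≠ 0) :
    IsIrrChar B (pushforward p (χ * star α)) ∧ χ = α * (pushforward p (χ * star α) ∘ p) := by
  set u := pushforward p (χ * star α)
  have hu_char : IsChar B u := (hχ.1.mul hα.star).pushforward hp
  obtain ⟨n, hn⟩ := hu_char.exists_cdot_eq_natCast hu_char
  have hχθ : cdot A χ (α * (u ∘ p)) = cdot B u u := by rw [cdot_mul_right, cdot_comp_right]
  have hθθ : cdot A (α * (u ∘ p)) (α * (u ∘ p)) = cdot B u u := by
    rw [cdot_mul_right, mul_right_comm, cdot_comp_right, pushforward_mul_comp, hα1, one_mul]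
  have hθ0 : α * (u ∘ p) ≠ 0 := by
    rwa [Ne, ← cdot_self_eq_zero_iff, hθθ, cdot_self_eq_zero_iff]
  have hχeq : χ = α * (u ∘ p) :=
    eq_of_cdot_eq_cdot_self hχ.2 (hχθ.trans hθθ.symm) (hθθ.trans hn) hθ0
  exact ⟨⟨hu_char, by rw [← hθθ, ← hχeq, hχ.2]⟩, hχeq⟩

theorem IsIrrChar.exists_eq_comp {p : A →* B} (hp : Function.Surjective p) {χ : A → ℂ}
    {h : B → ℂ} (hχ : IsIrrChar A χ) (hh : cdot A χ (h ∘ p) ≠ 0) :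
    ∃ u, IsIrrChar B u ∧ χ = u ∘ p := by
  have h0 : pushforward p (χ * star 1) ≠ 0 := fun h0 => hh <| by
    rw [cdot_comp_right, ← mul_one χ, ← star_one (A → ℂ), h0]
    simp [cdot]
  obtain ⟨hu, hχu⟩ := hχ.eq_mul_pushforward_comp hp (isChar_one A)
    (by rw [star_one, one_mul, pushforward_one hp]) h0
  exact ⟨_, hu, hχu.trans (one_mul _)⟩

theorem ind_apply_eq_sum_pushforward [Fintype A] (H : Subgroup A) (ψ : H → ℂ) (a : A) :
    ind H ψ a = (Nat.card A : ℂ)⁻¹ * ∑ x, pushforward H.subtype ψ (x * a * x⁻¹) := by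
  have := Fintype.ofFinite H
  have hA : (Nat.card A : ℂ) ≠ 0 := Nat.cast_ne_zero.mpr Nat.card_pos.ne'
  have hext (b : A) : ∑ h with H.subtype h = b, ψ h = if hb : b ∈ H then ψ ⟨b, hb⟩ else 0 := by
    split_ifs with hb
    · have hfiber : ({h | H.subtype h = b} : Finset H) = {⟨b, hb⟩} := Finset.ext fun h => by
        rw [Finset.mem_filter_univ, Finset.mem_singleton, Subtype.ext_iff, H.coe_subtype]
      rw [hfiber, Finset.sum_singleton]
    · refine Finset.sum_eq_zero fun h hh => (hb ?_).elim
      exact (Finset.mem_filter.mp hh).2 ▸ h.2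
  simp only [pushforward_apply, hext]
  rw [ind, finsum_eq_sum_of_fintype, ← Finset.mul_sum, ← mul_assoc, ← mul_div_assoc,
    inv_mul_cancel₀ hA, one_div]

theorem cdot_ind (H : Subgroup A) (ψ : H → ℂ) {χ : A → ℂ} (hχ : ∀ x a, χ (x * a * x⁻¹) = χ a) :
    cdot A (ind H ψ) χ = cdot H ψ (res H χ) := by
  have := Fintype.ofFinite A
  have hA : (Nat.card A : ℂ) ≠ 0 := Nat.cast_ne_zero.mpr Nat.card_pos.ne'
  have hconj (x : A) : ∑ a, pushforward H.subtype ψ (x * a * x⁻¹) * starRingEnd ℂ (χ a) =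
      ∑ a, pushforward H.subtype ψ a * starRingEnd ℂ (χ a) :=
    Fintype.sum_equiv (MulAut.conj x).toEquiv _ _ fun a => by simp [hχ]
  calc cdot A (ind H ψ) χ
      = (Nat.card A : ℂ)⁻¹ * ((Nat.card A : ℂ)⁻¹ *
          ∑ x, ∑ a, pushforward H.subtype ψ (x * a * x⁻¹) * starRingEnd ℂ (χ a)) := by
        rw [cdot_eq_sum, Finset.sum_comm]
        simp only [ind_apply_eq_sum_pushforward, mul_assoc, Finset.sum_mul, Finset.mul_sum]
    _ = cdot A (pushforward H.subtype ψ) χ := by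
        simp only [hconj, Finset.sum_const, Finset.card_univ, nsmul_eq_mul,
          ← Nat.card_eq_fintype_card]
        rw [inv_mul_cancel_left₀ hA, cdot_eq_sum]
    _ = cdot H ψ (res H χ) := (cdot_comp_right H.subtype ψ χ).symm

end Pushforward

section Prod

variable {G₁ G₂ : Type*} [Group G₁] [Finite G₁] [Group G₂] [Finite G₂]

/-- The external product of class functions, `(x, y) ↦ f₁ x * f₂ y`; on characters it is the
character `χ₁ × χ₂` of `G₁ × G₂`. It is written with projections so that closure of characters
under pullbacks and products applies to it. -/
def extProd (f₁ : G₁ → ℂ) (f₂ : G₂ → ℂ) : G₁ × G₂ → ℂ :=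
  (f₁ ∘ MonoidHom.fst G₁ G₂) * (f₂ ∘ MonoidHom.snd G₁ G₂)

theorem pushforward_snd_mul_comp_fst (f : G₁ × G₂ → ℂ) (h : G₁ → ℂ) :
    pushforward (MonoidHom.snd G₁ G₂) (f * star (h ∘ MonoidHom.fst G₁ G₂)) =
      fun y => cdot G₁ (fun x => f (x, y)) h := by
  have := Fintype.ofFinite G₁
  have := Fintype.ofFinite G₂
  have hcard : (Nat.card G₂ / Nat.card (G₁ × G₂) : ℂ) = (Nat.card G₁ : ℂ)⁻¹ := by
    rw [Nat.card_prod, Nat.cast_mul,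
      div_mul_cancel_right₀ (Nat.cast_ne_zero.mpr Nat.card_pos.ne')]
  funext y
  rw [pushforward_apply, hcard, cdot_eq_sum, Finset.sum_filter, Fintype.sum_prod_type]
  exact congrArg _ <| Finset.sum_congr rfl fun x _ =>
    (Fintype.sum_eq_single y fun _ hy => if_neg hy).trans (if_pos rfl)

theorem cdot_extProd (f₁ h₁ : G₁ → ℂ) (f₂ h₂ : G₂ → ℂ) :
    cdot (G₁ × G₂) (extProd f₁ f₂) (extProd h₁ h₂) = cdot G₁ f₁ h₁ * cdot G₂ f₂ h₂ := by
  have := Fintype.ofFinite G₁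
  have := Fintype.ofFinite G₂
  simp only [cdot_eq_sum, Fintype.sum_prod_type, Nat.card_prod, Nat.cast_mul, mul_inv]
  rw [mul_mul_mul_comm, Finset.sum_mul_sum]
  simp [extProd, mul_mul_mul_comm]

theorem IsIrrChar.extProd {f₁ : G₁ → ℂ} {f₂ : G₂ → ℂ} (h₁ : IsIrrChar G₁ f₁)
    (h₂ : IsIrrChar G₂ f₂) : IsIrrChar (G₁ × G₂) (extProd f₁ f₂) :=
  ⟨(h₁.1.comp _).mul (h₂.1.comp _), by rw [cdot_extProd, h₁.2, h₂.2, one_mul]⟩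

theorem IsIrrChar.exists_eq_extProd {χ : G₁ × G₂ → ℂ} (hχ : IsIrrChar (G₁ × G₂) χ) :
    ∃ (χ₁ : G₁ → ℂ) (χ₂ : G₂ → ℂ), IsIrrChar G₁ χ₁ ∧ IsIrrChar G₂ χ₂ ∧
      χ = _root_.extProd χ₁ χ₂ := by
  have hres : χ ∘ MonoidHom.inl G₁ G₂ ≠ 0 := fun h =>
    hχ.ne_zero (hχ.1.eq_zero_of_apply_one (congrFun h 1))
  obtain ⟨α, hα, hαχ⟩ := (hχ.1.comp (MonoidHom.inl G₁ G₂)).exists_isIrrChar_cdot_ne_zero hres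
  have hα1 : pushforward (MonoidHom.snd G₁ G₂)
      ((α ∘ MonoidHom.fst G₁ G₂) * star (α ∘ MonoidHom.fst G₁ G₂)) = 1 :=
    (pushforward_snd_mul_comp_fst _ α).trans (funext fun _ => hα.2)
  have h0 : pushforward (MonoidHom.snd G₁ G₂) (χ * star (α ∘ MonoidHom.fst G₁ G₂)) ≠ 0 := fun h =>
    hαχ ((congrFun (pushforward_snd_mul_comp_fst χ α) 1).symm.trans (congrFun h 1))
  obtain ⟨hu, hχu⟩ := hχ.eq_mul_pushforward_comp Prod.snd_surjective (hα.1.comp _) hα1 h0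
  exact ⟨α, _, hα, hu, hχu⟩

end Prod

section Relative

variable {G : Type*} [Group G] [Finite G] {N : Subgroup G}

/-- `ψ` is an irreducible character of `H ≥ N` that stays irreducible on `N`: the characters
allowed to separate irreducible characters in the definition of relative almost monomial. -/
def IsIrrOver {N H : Subgroup G} (hNH : N ≤ H) (ψ : H → ℂ) : Prop :=
  IsIrrChar H ψ ∧ IsIrrChar N (resTo hNH ψ)

theorem isRelAlmostMonomial_iff : IsRelAlmostMonomial G N ↔
    ∀ χ φ : G → ℂ, IsIrrChar G χ → IsIrrChar G φ → χ ≠ φ →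
      ∃ (H : Subgroup G) (hNH : N ≤ H) (ψ : H → ℂ), IsIrrOver hNH ψ ∧
        cdot H ψ (res H χ) ≠ 0 ∧ cdot H ψ (res H φ) = 0 := by
  refine forall₅_congr fun χ φ hχ hφ _ => exists₃_congr fun H hNH ψ => ?_
  rw [cdot_ind H ψ hχ.1.apply_conj, cdot_ind H ψ hφ.1.apply_conj, IsIrrOver, and_assoc]

theorem IsRelAlmostMonomial.exists_isIrrOver_cdot_ne_zero (h : IsRelAlmostMonomial G N)
    {χ : G → ℂ} (hχ : IsIrrChar G χ) :
    ∃ (H : Subgroup G) (hNH : N ≤ H) (ψ : H → ℂ), IsIrrOver hNH ψ ∧ cdot H ψ (res H χ) ≠ 0 := by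
  by_cases hχ1 : χ = 1
  · subst hχ1
    exact ⟨⊤, le_top, 1, ⟨isIrrChar_one _, isIrrChar_one _⟩,
      (isIrrChar_one _).2.trans_ne one_ne_zero⟩
  · obtain ⟨H, hNH, ψ, hψ, hψχ, -⟩ :=
      isRelAlmostMonomial_iff.mp h χ 1 hχ (isIrrChar_one G) hχ1
    exact ⟨H, hNH, ψ, hψ, hψχ⟩

theorem IsRelAlmostMonomial.map {B : Type*} [Group B] [Finite B] (h : IsRelAlmostMonomial G N)
    {p : G →* B} (hp : Function.Surjective p) : IsRelAlmostMonomial B (N.map p) := by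
  refine isRelAlmostMonomial_iff.mpr fun χ φ hχ hφ hne => ?_
  obtain ⟨H, hNH, ψ, ⟨hψ, hψN⟩, hψχ, hψφ⟩ := isRelAlmostMonomial_iff.mp h (χ ∘ p) (φ ∘ p)
    ((isIrrChar_comp_iff hp).mpr hχ) ((isIrrChar_comp_iff hp).mpr hφ)
    (hp.injective_comp_right.ne hne)
  have hpH := p.subgroupMap_surjective H
  have hres (f : B → ℂ) : res H (f ∘ p) = res (H.map p) f ∘ p.subgroupMap H := rfl
  rw [hres] at hψχ hψφ
  obtain ⟨u, hu, rfl⟩ := hψ.exists_eq_comp hpH hψχ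
  rw [cdot_comp_comp hpH] at hψχ hψφ
  exact ⟨H.map p, Subgroup.map_mono hNH, u,
    ⟨hu, (isIrrChar_comp_iff (p.subgroupMap_surjective N)).mp hψN⟩, hψχ, hψφ⟩

end Relative

section ProdSubgroup

variable {G₁ G₂ : Type*} [Group G₁] [Group G₂] {H₁ N₁ : Subgroup G₁} {H₂ N₂ : Subgroup G₂}

theorem map_fst_prod : (N₁.prod N₂).map (MonoidHom.fst G₁ G₂) = N₁ := by
  ext x
  simpa [Subgroup.mem_prod] using fun _ => ⟨1, N₂.one_mem⟩

theorem map_snd_prod : (N₁.prod N₂).map (MonoidHom.snd G₁ G₂) = N₂ := by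
  ext x
  simpa [Subgroup.mem_prod] using fun _ => ⟨1, N₁.one_mem⟩

/-- The external product `f₁ × f₂` of class functions on subgroups, as a function on the subgroup
`H₁.prod H₂` of `G₁ × G₂` instead of on the group `H₁ × H₂`. -/
def subgroupExtProd (f₁ : H₁ → ℂ) (f₂ : H₂ → ℂ) : H₁.prod H₂ → ℂ :=
  extProd f₁ f₂ ∘ (H₁.prodEquiv H₂).toMonoidHom

variable [Finite G₁] [Finite G₂]

theorem IsIrrChar.subgroupExtProd {f₁ : H₁ → ℂ} {f₂ : H₂ → ℂ} (h₁ : IsIrrChar H₁ f₁)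
    (h₂ : IsIrrChar H₂ f₂) : IsIrrChar (H₁.prod H₂) (subgroupExtProd f₁ f₂) :=
  (isIrrChar_comp_iff (H₁.prodEquiv H₂).surjective).mpr (h₁.extProd h₂)

theorem IsIrrOver.subgroupExtProd {h₁ : N₁ ≤ H₁} {h₂ : N₂ ≤ H₂} {ψ₁ : H₁ → ℂ} {ψ₂ : H₂ → ℂ}
    (hψ₁ : IsIrrOver h₁ ψ₁) (hψ₂ : IsIrrOver h₂ ψ₂) :
    IsIrrOver (Subgroup.prod_mono h₁ h₂) (subgroupExtProd ψ₁ ψ₂) :=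
  ⟨hψ₁.1.subgroupExtProd hψ₂.1, hψ₁.2.subgroupExtProd hψ₂.2⟩

theorem cdot_subgroupExtProd_res (ψ₁ : H₁ → ℂ) (ψ₂ : H₂ → ℂ) (χ₁ : G₁ → ℂ) (χ₂ : G₂ → ℂ) :
    cdot (H₁.prod H₂) (subgroupExtProd ψ₁ ψ₂) (res (H₁.prod H₂) (extProd χ₁ χ₂)) =
      cdot H₁ ψ₁ (res H₁ χ₁) * cdot H₂ ψ₂ (res H₂ χ₂) := by
  rw [← cdot_extProd]
  exact cdot_comp_comp (p := (H₁.prodEquiv H₂).toMonoidHom) (H₁.prodEquiv H₂).surjective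
    (extProd ψ₁ ψ₂) (extProd (res H₁ χ₁) (res H₂ χ₂))

theorem IsRelAlmostMonomial.prod (hG₁ : IsRelAlmostMonomial G₁ N₁)
    (hG₂ : IsRelAlmostMonomial G₂ N₂) : IsRelAlmostMonomial (G₁ × G₂) (N₁.prod N₂) := by
  refine isRelAlmostMonomial_iff.mpr fun χ φ hχ hφ hne => ?_
  obtain ⟨χ₁, χ₂, hχ₁, hχ₂, rfl⟩ := hχ.exists_eq_extProd
  obtain ⟨φ₁, φ₂, hφ₁, hφ₂, rfl⟩ := hφ.exists_eq_extProd
  suffices ∃ (H₁ : Subgroup G₁) (h₁ : N₁ ≤ H₁) (ψ₁ : H₁ → ℂ) (H₂ : Subgroup G₂) (h₂ : N₂ ≤ H₂)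
      (ψ₂ : H₂ → ℂ), (IsIrrOver h₁ ψ₁ ∧ cdot H₁ ψ₁ (res H₁ χ₁) ≠ 0) ∧
      (IsIrrOver h₂ ψ₂ ∧ cdot H₂ ψ₂ (res H₂ χ₂) ≠ 0) ∧
      (cdot H₁ ψ₁ (res H₁ φ₁) = 0 ∨ cdot H₂ ψ₂ (res H₂ φ₂) = 0) by
    obtain ⟨H₁, h₁, ψ₁, H₂, h₂, ψ₂, ⟨hψ₁, hχ₁⟩, ⟨hψ₂, hχ₂⟩, hφ⟩ := this
    refine ⟨H₁.prod H₂, Subgroup.prod_mono h₁ h₂, subgroupExtProd ψ₁ ψ₂,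
      hψ₁.subgroupExtProd hψ₂, ?_, ?_⟩
    · rw [cdot_subgroupExtProd_res]
      exact mul_ne_zero hχ₁ hχ₂
    · rw [cdot_subgroupExtProd_res]
      exact mul_eq_zero.mpr hφ
  by_cases heq : χ₁ = φ₁
  · obtain ⟨H₁, h₁, ψ₁, hψ₁⟩ := hG₁.exists_isIrrOver_cdot_ne_zero hχ₁
    obtain ⟨H₂, h₂, ψ₂, hψ₂, hψχ₂, hψφ₂⟩ := isRelAlmostMonomial_iff.mp hG₂ χ₂ φ₂ hχ₂ hφ₂
      fun h => hne (congrArg₂ extProd heq h)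
    exact ⟨H₁, h₁, ψ₁, H₂, h₂, ψ₂, hψ₁, ⟨hψ₂, hψχ₂⟩, .inr hψφ₂⟩
  · obtain ⟨H₁, h₁, ψ₁, hψ₁, hψχ₁, hψφ₁⟩ := isRelAlmostMonomial_iff.mp hG₁ χ₁ φ₁ hχ₁ hφ₁ heq
    obtain ⟨H₂, h₂, ψ₂, hψ₂⟩ := hG₂.exists_isIrrOver_cdot_ne_zero hχ₂
    exact ⟨H₁, h₁, ψ₁, H₂, h₂, ψ₂, ⟨hψ₁, hψχ₁⟩, hψ₂, .inl hψφ₁⟩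

end ProdSubgroup

theorem stmt10_general (G₁ G₂ : Type*) [Group G₁] [Finite G₁] [Group G₂] [Finite G₂]
    (N₁ : Subgroup G₁) (N₂ : Subgroup G₂) :
    (IsRelAlmostMonomial G₁ N₁ ∧ IsRelAlmostMonomial G₂ N₂) ↔
      IsRelAlmostMonomial (G₁ × G₂) (N₁.prod N₂) where
  mp h := h.1.prod h.2
  mpr h := by
    have hfst := h.map (p := MonoidHom.fst G₁ G₂) Prod.fst_surjective
    have hsnd := h.map (p := MonoidHom.snd G₁ G₂) Prod.snd_surjective
    rw [map_fst_prod] at hfst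
    rw [map_snd_prod] at hsnd
    exact ⟨hfst, hsnd⟩

theorem stmt10 (G₁ G₂ : Type*) [Group G₁] [Finite G₁] [Group G₂] [Finite G₂]
    (N₁ : Subgroup G₁) (N₂ : Subgroup G₂) [N₁.Normal] [N₂.Normal] :
    (IsRelAlmostMonomial G₁ N₁ ∧ IsRelAlmostMonomial G₂ N₂) ↔
      IsRelAlmostMonomial (G₁ × G₂) (N₁.prod N₂) :=
  stmt10_general G₁ G₂ N₁ N₂
end

section
/- Let A ⊴ G be an abelian normal subgroup of a finite group G. If G is almost monomial, then G is relative almost monomial with respect to A. -/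
open scoped Classical

/-!
By Frobenius reciprocity `⟨λ^G, χ⟩` is the dimension of the `λ`-weight space of `K` in a
representation affording `χ`. Project a `λ`-weight vector for `χ` to a nonzero weight vector `w` of
some linear character `α` of `A`, and let `μ` be the linear character by which the stabilizer `L` of
the line `ℂw` acts on it. Then `A ≤ L`, and the elements of `K` fixing `α` lie in `L`, where `μ`
agrees with `λ`. If `u` were a `μ`-weight vector for `φ`, its projection to the `λ`-weight space
of `K`, projected back to the `α`-weight space of `A`, would be a nonzero multiple of `u`, because
the elements of `K` moving `α` contribute nothing. So `λ` would also occur in `φ`.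
-/

namespace AlmostMonomial

section WeightSpace

variable {k G V : Type*} [Field k] [Group G] [AddCommGroup V] [Module k V]
  (ρ : Representation k G V) (l : G →* kˣ)

/-- The twist `l⁻¹ ⊗ ρ` of a representation by the inverse of a linear character, realised on the
space of `ρ`. It turns weight vectors of `ρ` into invariant vectors. -/
noncomputable def invTwist : Representation k G V where
  toFun g := l g⁻¹ • ρ g
  map_one' := by simp
  map_mul' g h := by simp [smul_mul_smul_comm, mul_comm]

lemma invTwist_apply (g : G) (v : V) : invTwist ρ l g v = (l g)⁻¹ • ρ g v := by
  simp [invTwist]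

/-- The weight space of a linear character `l`: the vectors on which the group acts through `l`. -/
noncomputable def weightSpace : Submodule k V := (invTwist ρ l).invariants

variable {ρ l} in
lemma mem_weightSpace {v : V} : v ∈ weightSpace ρ l ↔ ∀ g, ρ g v = l g • v := by
  simp only [weightSpace, Representation.mem_invariants, invTwist_apply, inv_smul_eq_iff]

variable [Fintype G]

/-- The projection onto the weight space of `l`, multiplied by `|G|` so that it makes sense over
any field. -/
noncomputable def weightSum : Module.End k V := (invTwist ρ l).norm

lemma weightSum_apply (v : V) : weightSum ρ l v = ∑ g, (l g)⁻¹ • ρ g v := by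
  simp only [weightSum, Representation.norm, LinearMap.sum_apply, invTwist_apply]

lemma weightSum_mem_weightSpace (v : V) : weightSum ρ l v ∈ weightSpace ρ l :=
  fun g => (invTwist ρ l).self_norm_apply g v

lemma weightSum_apply_rep (g : G) (v : V) : weightSum ρ l (ρ g v) = l g • weightSum ρ l v := by
  rw [← inv_smul_eq_iff, ← LinearMap.map_smul_of_tower, ← invTwist_apply]
  exact (invTwist ρ l).norm_self_apply g v

variable {ρ l}

lemma weightSum_of_mem_weightSpace {v : V} (hv : v ∈ weightSpace ρ l) :
    weightSum ρ l v = Nat.card G • v := by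
  simp [weightSum_apply, mem_weightSpace.mp hv]

lemma weightSum_eq_zero_of_mem_weightSpace {m : G →* kˣ} (hml : m ≠ l) {v : V}
    (hv : v ∈ weightSpace ρ m) : weightSum ρ l v = 0 := by
  by_contra h0
  refine hml (MonoidHom.ext fun g => Units.ext (smul_left_injective k h0 ?_))
  change m g • weightSum ρ l v = l g • weightSum ρ l v
  rw [← weightSum_apply_rep, mem_weightSpace.mp hv, LinearMap.map_smul_of_tower]

end WeightSpace

section Abelian

variable {k G V : Type*} [Field k] [CommGroup G]
  [HasEnoughRootsOfUnity k (Monoid.exponent G)] [AddCommGroup V] [Module k V]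

lemma sum_monoidHom_apply_eq_zero [Finite G] [Fintype (G →* kˣ)] {g : G} (hg : g ≠ 1) :
    ∑ α : G →* kˣ, (α g : k) = 0 := by
  obtain ⟨β, hβ⟩ := CommGroup.exists_apply_ne_one_of_hasEnoughRootsOfUnity G k hg
  refine sum_hom_units_eq_zero ((Units.coeHom k).comp (MonoidHom.eval g)) fun h => hβ ?_
  exact Units.ext (DFunLike.congr_fun h β)

lemma sum_weightSum [Fintype G] [Fintype (G →* kˣ)] (ρ : Representation k G V) (v : V) :
    ∑ α : G →* kˣ, weightSum ρ α v = Nat.card G • v := by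
  have hcoeff (g : G) (hg : g ≠ 1) : ∑ α : G →* kˣ, (α g)⁻¹ • ρ g v = 0 := by
    simp only [← map_inv, Units.smul_def, ← Finset.sum_smul,
      sum_monoidHom_apply_eq_zero (inv_ne_one.mpr hg), zero_smul]
  simp only [weightSum_apply]
  rw [Finset.sum_comm, Fintype.sum_eq_single 1 hcoeff]
  simp [← Nat.card_eq_fintype_card, CommGroup.card_monoidHom_of_hasEnoughRootsOfUnity]

lemma exists_weightSum_ne_zero [Fintype G] (hG : (Nat.card G : k) ≠ 0)
    (ρ : Representation k G V) {v : V} (hv : v ≠ 0) :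
    ∃ α : G →* kˣ, weightSum ρ α v ≠ 0 := by
  have := Fintype.ofFinite (G →* kˣ)
  by_contra! h
  have hsum := sum_weightSum ρ v
  simp only [h, Finset.sum_const_zero, ← Nat.cast_smul_eq_nsmul k] at hsum
  exact smul_ne_zero hG hv hsum.symm

end Abelian

section LineStabilizer

variable {k G V U : Type*} [Field k] [Group G] [AddCommGroup V] [Module k V]
  [AddCommGroup U] [Module k U] (ρ : Representation k G V) {w : V}

lemma apply_mul_eq_smul {g h : G} {c d : kˣ} (hg : ρ g w = c • w) (hh : ρ h w = d • w) :
    ρ (g * h) w = (c * d) • w := by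
  rw [map_mul, Module.End.mul_apply, hh, LinearMap.map_smul_of_tower, hg, smul_smul, mul_comm]

/-- The largest subgroup acting on the line spanned by `w`. The eigenvalue is required to be a
unit, which for `w ≠ 0` is automatic. -/
def lineStabilizer (w : V) : Subgroup G where
  carrier := {g | ∃ c : kˣ, ρ g w = c • w}
  one_mem' := ⟨1, by simp⟩
  mul_mem' := by
    rintro g h ⟨c, hc⟩ ⟨d, hd⟩
    exact ⟨c * d, apply_mul_eq_smul ρ hc hd⟩
  inv_mem' := by
    rintro g ⟨c, hc⟩
    refine ⟨c⁻¹, ?_⟩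
    rw [eq_inv_smul_iff, ← LinearMap.map_smul_of_tower, ← hc, Representation.inv_self_apply]

/-- The linear character through which the stabilizer of the line spanned by `w ≠ 0` acts on this
line. -/
noncomputable def lineCharacter (hw : w ≠ 0) : lineStabilizer ρ w →* kˣ :=
  have huniq {c d : kˣ} (h : c • w = d • w) : c = d := Units.ext (smul_left_injective k hw h)
  have hspec (g : lineStabilizer ρ w) : ρ g w = g.2.choose • w := g.2.choose_spec
  { toFun g := g.2.choose
    map_one' := huniq ((hspec 1).symm.trans (by simp))
    map_mul' g h := huniq ((hspec (g * h)).symm.trans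
      (apply_mul_eq_smul ρ (hspec g) (hspec h))) }

lemma mem_weightSpace_lineCharacter (hw : w ≠ 0) :
    w ∈ weightSpace (ρ.comp (lineStabilizer ρ w).subtype) (lineCharacter ρ hw) :=
  mem_weightSpace.mpr fun g => g.2.choose_spec

variable {ρ}

lemma apply_eq_smul_of_mem_weightSpace_lineCharacter (hw : w ≠ 0) {σ : Representation k G U} {u : U}
    (hu : u ∈ weightSpace (σ.comp (lineStabilizer ρ w).subtype) (lineCharacter ρ hw))
    {g : G} {c : kˣ} (hg : ρ g w = c • w) : σ g u = c • u := by
  let g' : lineStabilizer ρ w := ⟨g, c, hg⟩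
  have hc : lineCharacter ρ hw g' = c := Units.ext <| smul_left_injective k hw <|
    (mem_weightSpace.mp (mem_weightSpace_lineCharacter ρ hw) g').symm.trans hg
  rw [← hc]
  exact mem_weightSpace.mp hu g'

end LineStabilizer

section Inertia

variable {G M : Type*} [Group G] {A : Subgroup G} [A.Normal]

/-- The conjugate `α ^ g : a ↦ α (g a g⁻¹)` of a homomorphism defined on a normal subgroup. -/
def conjHom [MulOneClass M] (α : A →* M) (g : G) : A →* M :=
  α.comp (MulAut.conjNormal g).toMonoidHom

lemma conjHom_one [MulOneClass M] (α : A →* M) : conjHom α 1 = α := by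
  ext a
  simp [conjHom]

lemma conjHom_mul [MulOneClass M] (α : A →* M) (g h : G) :
    conjHom α (g * h) = conjHom (conjHom α g) h := by
  ext a
  simp [conjHom]

/-- The inertia group of `α`: the elements of `G` whose conjugation action fixes `α`. -/
def inertia [MulOneClass M] (α : A →* M) : Subgroup G where
  carrier := {g | conjHom α g = α}
  one_mem' := conjHom_one α
  mul_mem' {g h} (hg : conjHom α g = α) (hh : conjHom α h = α) := by
    change conjHom α (g * h) = α
    rw [conjHom_mul, hg, hh]
  inv_mem' {g} (hg : conjHom α g = α) :=
    calc conjHom α g⁻¹ = conjHom (conjHom α g) g⁻¹ := by rw [hg]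
      _ = α := by rw [← conjHom_mul, mul_inv_cancel, conjHom_one]

variable {k V : Type*} [Fintype G] [Field k] [AddCommGroup V] [Module k V]
  (ρ : Representation k G V) {α : A →* kˣ}

lemma apply_weightSum_conjHom (α : A →* kˣ) (g : G) (v : V) :
    ρ g (weightSum (ρ.comp A.subtype) (conjHom α g) v) =
      weightSum (ρ.comp A.subtype) α (ρ g v) := by
  simp only [weightSum_apply, map_sum, LinearMap.map_smul_of_tower]
  refine Fintype.sum_equiv (MulAut.conjNormal g).toEquiv _ _ fun a => ?_
  have hconj : ρ g (ρ a v) = ρ (g * a * g⁻¹) (ρ g v) := by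
    simp only [← Module.End.mul_apply, ← map_mul, inv_mul_cancel_right]
  exact congrArg ((conjHom α g a)⁻¹ • ·) hconj

lemma apply_weightSum_of_mem_inertia {g : G} (hg : g ∈ inertia α) (v : V) :
    ρ g (weightSum (ρ.comp A.subtype) α v) = weightSum (ρ.comp A.subtype) α (ρ g v) := by
  rw [← apply_weightSum_conjHom, show conjHom α g = α from hg]

variable {ρ}

lemma weightSum_apply_rep_of_notMem_inertia {g : G} (hg : g ∉ inertia α) {v : V}
    (hv : v ∈ weightSpace (ρ.comp A.subtype) α) :
    weightSum (ρ.comp A.subtype) α (ρ g v) = 0 := by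
  rw [← apply_weightSum_conjHom, weightSum_eq_zero_of_mem_weightSpace (Ne.symm hg) hv, map_zero]

lemma weightSum_weightSum {K : Subgroup G} {l : K →* kˣ} {v : V}
    (hα : v ∈ weightSpace (ρ.comp A.subtype) α)
    (hl : ∀ g : K, (g : G) ∈ inertia α → ρ g v = l g • v) :
    weightSum (ρ.comp A.subtype) α (weightSum (ρ.comp K.subtype) l v) =
      (Nat.card ((inertia α).subgroupOf K) * Nat.card A) • v := by
  have hterm (g : K) : weightSum (ρ.comp A.subtype) α ((l g)⁻¹ • ρ g v) =
      if g ∈ (inertia α).subgroupOf K then Nat.card A • v else 0 := by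
    split_ifs with hg
    · rw [hl g hg, inv_smul_smul, weightSum_of_mem_weightSpace hα]
    · rw [LinearMap.map_smul_of_tower, smul_eq_zero_iff_eq]
      exact weightSum_apply_rep_of_notMem_inertia hg hα
  rw [weightSum_apply (ρ.comp K.subtype), map_sum]
  simp only [MonoidHom.comp_apply, Subgroup.coe_subtype, hterm]
  rw [← Finset.sum_filter, Finset.sum_const, mul_smul,
    Nat.card_eq_fintype_card (α := (inertia α).subgroupOf K), Fintype.card_subtype]

end Inertia

section Separation

variable {k G V U : Type*} [Field k] [Group G] [AddCommGroup V] [Module k V]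
  [AddCommGroup U] [Module k U]

lemma cast_card_subgroup_ne_zero (hG : (Nat.card G : k) ≠ 0) (H : Subgroup G) :
    (Nat.card H : k) ≠ 0 :=
  ne_zero_of_dvd_ne_zero hG (Nat.cast_dvd_cast H.card_subgroup_dvd_card)

open scoped IsMulCommutative in
theorem exists_le_weightSpace_ne_bot_and_eq_bot [Finite G] (hG : (Nat.card G : k) ≠ 0)
    (A : Subgroup G) [A.Normal] [IsMulCommutative A]
    [HasEnoughRootsOfUnity k (Monoid.exponent A)]
    {ρ : Representation k G V} {σ : Representation k G U} {K : Subgroup G} {l : K →* kˣ}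
    (hρ : weightSpace (ρ.comp K.subtype) l ≠ ⊥) (hσ : weightSpace (σ.comp K.subtype) l = ⊥) :
    ∃ L : Subgroup G, A ≤ L ∧ ∃ μ : L →* kˣ,
      weightSpace (ρ.comp L.subtype) μ ≠ ⊥ ∧ weightSpace (σ.comp L.subtype) μ = ⊥ := by
  have := Fintype.ofFinite G
  obtain ⟨v, hv, hv0⟩ := Submodule.exists_mem_ne_zero_of_ne_bot hρ
  obtain ⟨α, hw⟩ := exists_weightSum_ne_zero (cast_card_subgroup_ne_zero hG A)
    (ρ.comp A.subtype) hv0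
  set w := weightSum (ρ.comp A.subtype) α v
  have hwA (a : A) : ρ a w = α a • w :=
    mem_weightSpace.mp (weightSum_mem_weightSpace (ρ.comp A.subtype) α v) a
  have hwK (g : K) (hg : (g : G) ∈ inertia α) : ρ g w = l g • w := by
    rw [apply_weightSum_of_mem_inertia ρ hg, ← LinearMap.map_smul_of_tower]
    exact congrArg _ (mem_weightSpace.mp hv g)
  refine ⟨lineStabilizer ρ w, fun a ha => ⟨_, hwA ⟨a, ha⟩⟩, lineCharacter ρ hw,
    Submodule.ne_bot_iff _ |>.mpr ⟨w, mem_weightSpace_lineCharacter ρ hw, hw⟩, ?_⟩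
  rw [Submodule.eq_bot_iff] at hσ ⊢
  intro u hu
  have huA : u ∈ weightSpace (σ.comp A.subtype) α :=
    mem_weightSpace.mpr fun a => apply_eq_smul_of_mem_weightSpace_lineCharacter hw hu (hwA a)
  have huK (g : K) (hg : (g : G) ∈ inertia α) : σ g u = l g • u :=
    apply_eq_smul_of_mem_weightSpace_lineCharacter hw hu (hwK g hg)
  have hcard : ((Nat.card ((inertia α).subgroupOf K) * Nat.card A : ℕ) : k) ≠ 0 := by
    rw [Nat.cast_mul]
    exact mul_ne_zero (cast_card_subgroup_ne_zero (cast_card_subgroup_ne_zero hG K) _)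
      (cast_card_subgroup_ne_zero hG A)
  have hzero := weightSum_weightSum huA huK
  rw [hσ _ (weightSum_mem_weightSpace _ l u), map_zero, ← Nat.cast_smul_eq_nsmul k] at hzero
  exact (smul_eq_zero.mp hzero.symm).resolve_left hcard

end Separation

section Characters

variable {G : Type*} [Group G]

lemma exists_representation_of_isChar {χ : G → ℂ} (hχ : IsChar G χ) :
    ∃ (n : ℕ) (ρ : Representation ℂ G (Fin n → ℂ)), ρ.character = χ := by
  obtain ⟨n, ρ, rfl⟩ := hχ
  refine ⟨n, (Matrix.toLinAlgEquiv' (R := ℂ) (n := Fin n)).toAlgHom.toMonoidHom.comp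
    ((Units.coeHom _).comp ρ), ?_⟩
  ext g
  exact Matrix.trace_toLin'_eq _

variable [Finite G]

lemma conj_monoidHom_apply (l : G →* ℂˣ) (g : G) : (starRingEnd ℂ) (l g : ℂ) = (l g⁻¹ : ℂ) := by
  have hpow : (l g : ℂ) ^ Nat.card G = 1 := by
    rw [← Units.val_pow_eq_pow_val, ← map_pow, pow_card_eq_one', map_one, Units.val_one]
  rw [map_inv, Units.val_inv_eq_inv_val,
    Complex.inv_eq_conj (Complex.norm_eq_one_of_pow_eq_one hpow Nat.card_pos.ne')]

lemma isIrrChar_monoidHom (l : G →* ℂˣ) : IsIrrChar G fun g => (l g : ℂ) := by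
  refine ⟨⟨1, (Units.map (Matrix.scalar (Fin 1)).toMonoidHom).comp l, ?_⟩, ?_⟩
  · ext g
    simp [Matrix.trace]
  · have := Fintype.ofFinite G
    simp only [cdot, conj_monoidHom_apply, ← Units.val_mul, ← map_mul, mul_inv_cancel, map_one,
      Units.val_one, finsum_eq_sum_of_fintype]
    simp

lemma cdot_ind (H : Subgroup G) (f : H → ℂ) {χ : G → ℂ} (hχ : ∀ x g, χ (x * g * x⁻¹) = χ g) :
    cdot G (ind H f) χ = cdot H f (res H χ) := by
  have := Fintype.ofFinite G
  let F : G → ℂ := fun g => (if h : g ∈ H then f ⟨g, h⟩ else 0) * (starRingEnd ℂ) (χ g)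
  have hF : ∑ g, F g = ∑ h : H, f h * (starRingEnd ℂ) (res H χ h) := by
    refine (Fintype.sum_of_injective ((↑) : H → G) Subtype.val_injective _ F
      (fun g hg => ?_) fun h => ?_).symm
    · have hgH : g ∉ H := by simpa using hg
      simp [F, hgH]
    · simp [F, res]
  have hconj (x : G) : ∑ g, (if h : x * g * x⁻¹ ∈ H then f ⟨x * g * x⁻¹, h⟩ else 0) *
      (starRingEnd ℂ) (χ g) = ∑ g, F g :=
    Fintype.sum_equiv (MulAut.conj x).toEquiv _ _ fun g => by simp [F, hχ]
  simp only [cdot, ind, finsum_eq_sum_of_fintype, mul_assoc (Nat.card H : ℂ)⁻¹,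
    ← Finset.mul_sum, Finset.sum_mul]
  rw [Finset.sum_comm]
  simp only [hconj, hF, Finset.sum_const, Finset.card_univ, nsmul_eq_mul,
    Nat.card_eq_fintype_card]
  rw [mul_left_comm, inv_mul_cancel_left₀ (Nat.cast_ne_zero.mpr Fintype.card_ne_zero)]

variable {V : Type*} [AddCommGroup V] [Module ℂ V] [FiniteDimensional ℂ V]
  (ρ : Representation ℂ G V)

lemma cdot_monoidHom_character (l : G →* ℂˣ) :
    cdot G (fun g => (l g : ℂ)) ρ.character = Module.finrank ℂ (weightSpace ρ l) := by
  have := Fintype.ofFinite G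
  have := invertibleOfNonzero (Nat.cast_ne_zero (R := ℂ).mpr (Nat.card_pos (α := G)).ne')
  have htwist (g : G) : (invTwist ρ l).character g = (l g⁻¹ : ℂ) * ρ.character g := by
    simp [Representation.character, invTwist, Units.smul_def]
  have hconj (g : G) : (starRingEnd ℂ) (l g⁻¹ : ℂ) = l g := by
    rw [conj_monoidHom_apply, inv_inv]
  rw [weightSpace, ← Complex.conj_natCast, ← Representation.card_inv_mul_sum_char_eq_finrank]
  simp only [cdot, finsum_eq_sum_of_fintype, htwist, map_mul, map_sum, map_inv₀,
    Complex.conj_natCast, hconj]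

lemma cdot_ind_monoidHom_character_eq_zero_iff {H : Subgroup G} {l : H →* ℂˣ} :
    cdot G (ind H fun h => (l h : ℂ)) ρ.character = 0 ↔
      weightSpace (ρ.comp H.subtype) l = ⊥ := by
  have hrank := cdot_monoidHom_character (ρ.comp H.subtype) l
  rw [cdot_ind H _ fun x g => ρ.char_conj g x]
  change cdot H _ (Representation.character (ρ.comp H.subtype)) = 0 ↔ _
  rw [hrank, Nat.cast_eq_zero, Submodule.finrank_eq_zero]

end Characters

end AlmostMonomial

open AlmostMonomial in
theorem stmt15 (G : Type*) [Group G] [Finite G] (A : Subgroup G) [A.Normal]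
    (hab : ∀ x y : A, x * y = y * x) (h : IsAlmostMonomial G) :
    IsRelAlmostMonomial G A := by
  intro χ φ hχ hφ hne
  obtain ⟨K, _, ⟨l, rfl⟩, hKχ, hKφ⟩ := h χ φ hχ hφ hne
  obtain ⟨n, ρ, rfl⟩ := exists_representation_of_isChar hχ.1
  obtain ⟨m, σ, rfl⟩ := exists_representation_of_isChar hφ.1
  rw [ne_eq, cdot_ind_monoidHom_character_eq_zero_iff] at hKχ
  rw [cdot_ind_monoidHom_character_eq_zero_iff] at hKφ
  have : IsMulCommutative A := .of_comm hab
  have hG : (Nat.card G : ℂ) ≠ 0 := Nat.cast_ne_zero.mpr Nat.card_pos.ne'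
  obtain ⟨L, hAL, μ, hLχ, hLφ⟩ := exists_le_weightSpace_ne_bot_and_eq_bot hG A hKχ hKφ
  exact ⟨L, hAL, _, isIrrChar_monoidHom μ, isIrrChar_monoidHom (μ.comp (Subgroup.inclusion hAL)),
    (cdot_ind_monoidHom_character_eq_zero_iff ρ).not.mpr hLχ,
    (cdot_ind_monoidHom_character_eq_zero_iff σ).mpr hLφ⟩
end
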